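/- arXiv:2012.08162 — 15 statements merged into one kernel-verified Lean document; each statement's English description precedes it below -/
import Mathlib

section
/- Let X be a real normed linear space and let x, y be unit vectors in X with x ⊥_D^ε y for some ε ∈ [0,1). Then there exist ε₁ > 0, ε₂ > 0 and ε₃ ∈ (0,1) such that z ⊥_D^{ε₃} w for every unit vector z with ‖z − x‖ < ε₁ and every unit vector w with ‖w − y‖ < ε₂. -/
/-!
Put `c = √(1 - ε²) ∈ (0, 1]`; the claim holds with `ε₁ = ε₂ = c / 8` and `ε₃` chosen so that
`√(1 - ε₃²) = c / 2`. For unit vectors `z`, `w` the bound `‖z + t w‖ ≥ |t| - 1` settles `|t| ≥ 2`.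
For `|t| < 2`, the vector `z + t w` lies within `c / 8 + 2 c / 8` of `x + t y`, whose norm is at
least `c`.
-/

open Set Metric

section Defs

variable {E : Type*} [NormedAddCommGroup E] [NormedSpace ℝ E]

/-- Birkhoff-James orthogonality: `x ⊥_B y` iff `‖x + t • y‖ ≥ ‖x‖` for all real `t`. -/
def BJOrth (x y : E) : Prop := ∀ t : ℝ, ‖x‖ ≤ ‖x + t • y‖

/-- Dragomir-type approximate orthogonality: `x ⊥_D^ε y` iff
`‖x + t • y‖ ≥ √(1 - ε²) ‖x‖` for all real `t`. -/
def DOrth (ε : ℝ) (x y : E) : Prop :=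
  ∀ t : ℝ, Real.sqrt (1 - ε ^ 2) * ‖x‖ ≤ ‖x + t • y‖

/-- Chmieliński-type approximate orthogonality: `x ⊥_B^ε y` iff
`‖x + t • y‖² ≥ ‖x‖² - 2 ε ‖x‖ ‖t • y‖` for all real `t`. -/
def BOrth (ε : ℝ) (x y : E) : Prop :=
  ∀ t : ℝ, ‖x‖ ^ 2 - 2 * ε * ‖x‖ * ‖t • y‖ ≤ ‖x + t • y‖ ^ 2

/-- The set of supporting functionals at `x`. -/
def SuppJ (x : E) : Set (E →L[ℝ] ℝ) := {f | ‖f‖ = 1 ∧ f x = ‖x‖}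

/-- The local property (P) at `x`: there is no unit vector `y` with `x ⊥_B y` such that
every supporting functional of `y` (or its negative) supports `x`. -/
def LocalP (x : E) : Prop :=
  ¬ ∃ y : E, ‖y‖ = 1 ∧ BJOrth x y ∧ ∀ f ∈ SuppJ y, f ∈ SuppJ x ∨ -f ∈ SuppJ x

end Defs

theorem stmt_0 {X : Type*} [NormedAddCommGroup X] [NormedSpace ℝ X]
    (x y : X) (hx : ‖x‖ = 1) (hy : ‖y‖ = 1)
    (ε : ℝ) (hε : ε ∈ Set.Ico (0 : ℝ) 1) (h : DOrth ε x y) :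
    ∃ ε₁ > (0 : ℝ), ∃ ε₂ > (0 : ℝ), ∃ ε₃ ∈ Set.Ioo (0 : ℝ) 1,
      ∀ z : X, ‖z‖ = 1 → ‖z - x‖ < ε₁ →
        ∀ w : X, ‖w‖ = 1 → ‖w - y‖ < ε₂ → DOrth ε₃ z w := by
  obtain ⟨hε0, hε1⟩ := hε
  have hpos : 0 < 1 - ε ^ 2 := by nlinarith
  unfold DOrth at h ⊢
  rw [hx] at h
  have hc0 : 0 < Real.sqrt (1 - ε ^ 2) := Real.sqrt_pos.2 hpos
  have hc1 : Real.sqrt (1 - ε ^ 2) ≤ 1 := by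
    rw [Real.sqrt_le_left zero_le_one]
    nlinarith
  generalize Real.sqrt (1 - ε ^ 2) = c at h hc0 hc1
  have hd : 0 < 1 - (c / 2) ^ 2 := by nlinarith
  refine ⟨c / 8, by positivity, c / 8, by positivity, Real.sqrt (1 - (c / 2) ^ 2),
    ⟨Real.sqrt_pos.2 hd, ?_⟩, ?_⟩
  · rw [Real.sqrt_lt' one_pos]
    nlinarith
  intro z hz hzx w hw hwy t
  rw [Real.sq_sqrt hd.le, sub_sub_cancel, Real.sqrt_sq (by positivity), hz, mul_one]
  rcases le_or_gt 2 |t| with ht | ht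
  · have h1 : ‖t • w‖ ≤ ‖z + t • w‖ + ‖z‖ := by
      simpa using norm_sub_le (z + t • w) z
    rw [norm_smul, Real.norm_eq_abs, hw, hz] at h1
    linarith
  · have h1 : ‖x + t • y‖ ≤ ‖z + t • w‖ + (‖z - x‖ + ‖t • (w - y)‖) := by
      have e : x + t • y = (z + t • w) - ((z - x) + t • (w - y)) := by
        rw [smul_sub]
        abel
      rw [e]
      exact (norm_sub_le _ _).trans (by gcongr; exact norm_add_le _ _)
    rw [norm_smul, Real.norm_eq_abs] at h1
    have h2 := h t
    have h3 : |t| * ‖w - y‖ ≤ 2 * (c / 8) := by gcongr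
    linarith
end

section
/- Let X be a real normed linear space and let x, y be unit vectors in X with x ≠ y and x ≠ −y. Then there exists ε ∈ [0,1) such that x ⊥_D^ε y. -/
/-! Put `m = min ‖x + y‖ ‖x - y‖`, which is positive since `x ≠ ±y`. For every real `t`, with
`s = ±1` the sign of `t`, the triangle inequality gives `‖x + t y‖ ≥ |1 - |t||` and
`‖x + t y‖ ≥ ‖x + s y‖ - |1 - |t||`, hence `‖x + t y‖ ≥ m / 2`. So `ε = √(1 - (m / 2)²)` works. -/

open Set Metric

/-- The half `t ≥ 0` of the bound; the case `t ≤ 0` is obtained by replacing `y` with `-y`. -/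
lemma norm_add_le_two_mul_norm_add_smul {X : Type*} [NormedAddCommGroup X] [NormedSpace ℝ X]
    (x y : X) (hx : ‖x‖ = 1) (hy : ‖y‖ = 1) (t : ℝ) (ht : 0 ≤ t) :
    ‖x + y‖ ≤ 2 * ‖x + t • y‖ := by
  have hty : ‖t • y‖ = t := by rw [norm_smul, hy, Real.norm_of_nonneg ht, mul_one]
  have h1 : |1 - t| ≤ ‖x + t • y‖ := by
    have h := abs_norm_sub_norm_le x (-(t • y))
    rwa [norm_neg, hx, hty, sub_neg_eq_add] at h
  have h2 : ‖x + y‖ ≤ ‖x + t • y‖ + |1 - t| := by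
    have h := norm_add_le (x + t • y) ((1 - t) • y)
    rw [norm_smul, hy, mul_one, Real.norm_eq_abs] at h
    have e : x + t • y + (1 - t) • y = x + y := by module
    rwa [e] at h
  linarith

theorem stmt_1 {X : Type*} [NormedAddCommGroup X] [NormedSpace ℝ X]
    (x y : X) (hx : ‖x‖ = 1) (hy : ‖y‖ = 1) (h1 : x ≠ y) (h2 : x ≠ -y) :
    ∃ ε ∈ Set.Ico (0 : ℝ) 1, DOrth ε x y := by
  obtain ⟨c, hc⟩ : ∃ c : ℝ, c = min ‖x + y‖ ‖x - y‖ / 2 := ⟨_, rfl⟩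
  have hp : 0 < ‖x + y‖ := norm_pos_iff.2 fun h => h2 (eq_neg_of_add_eq_zero_left h)
  have hm : 0 < ‖x - y‖ := norm_pos_iff.2 (sub_ne_zero.2 h1)
  have hc0 : 0 < c := by rw [hc]; exact half_pos (lt_min hp hm)
  have hcp : 2 * c ≤ ‖x + y‖ := by linarith [min_le_left ‖x + y‖ ‖x - y‖]
  have hcm : 2 * c ≤ ‖x - y‖ := by linarith [min_le_right ‖x + y‖ ‖x - y‖]
  have hc1 : c ≤ 1 := by linarith [norm_add_le x y]
  refine ⟨Real.sqrt (1 - c ^ 2), ⟨Real.sqrt_nonneg _, ?_⟩, fun t => ?_⟩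
  · rw [Real.sqrt_lt' one_pos]
    nlinarith
  · rw [Real.sq_sqrt (by nlinarith), sub_sub_cancel, Real.sqrt_sq hc0.le, hx, mul_one]
    rcases le_total 0 t with ht | ht
    · linarith [norm_add_le_two_mul_norm_add_smul x y hx hy t ht]
    · have h := norm_add_le_two_mul_norm_add_smul x (-y) hx (by rwa [norm_neg]) (-t)
        (neg_nonneg.2 ht)
      rw [neg_smul_neg, ← sub_eq_add_neg] at h
      linarith
end

section
/- Let X be a finite-dimensional real Banach space (finite-dimensional real normed space). Then the Birkhoff-James orthogonality is D-approximately symmetric in X: there exists ε ∈ [0,1) such that for all x, y ∈ X, x ⊥_B y implies y ⊥_D^ε x. -/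
/-!
If `x ⊥_B y`, then for every `t` the vector `y + t • x` has norm at least `|t| ‖x‖` (rescale the
orthogonality inequality by `t`), and by the triangle inequality at least `‖y‖ - |t| ‖x‖`.
Averaging the two bounds gives `‖y + t • x‖ ≥ ‖y‖ / 2`, so `ε = √3 / 2`, for which
`√(1 - ε²) = 1 / 2`, works uniformly in every real normed space.
-/

open Set Metric

theorem BJOrth.abs_mul_norm_le {E : Type*} [NormedAddCommGroup E] [NormedSpace ℝ E] {x y : E}
    (h : BJOrth x y) (t : ℝ) : |t| * ‖x‖ ≤ ‖y + t • x‖ := by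
  rcases eq_or_ne t 0 with rfl | ht
  · simp
  · have e : y + t • x = t • (x + t⁻¹ • y) := by
      rw [smul_add, smul_inv_smul₀ ht, add_comm]
    rw [e, norm_smul, Real.norm_eq_abs]
    exact mul_le_mul_of_nonneg_left (h t⁻¹) (abs_nonneg t)

theorem stmt_2 {X : Type*} [NormedAddCommGroup X] [NormedSpace ℝ X]
    [FiniteDimensional ℝ X] :
    ∃ ε ∈ Set.Ico (0 : ℝ) 1, ∀ x y : X, BJOrth x y → DOrth ε y x := by
  have hsq : (√3 / 2 : ℝ) ^ 2 = 3 / 4 := by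
    rw [div_pow, Real.sq_sqrt (by norm_num)]
    norm_num
  refine ⟨√3 / 2, ⟨by positivity, ?_⟩, fun x y h t => ?_⟩
  · nlinarith [hsq]
  · have hs : √(1 - (√3 / 2 : ℝ) ^ 2) = 1 / 2 := by
      rw [hsq, show (1 - 3 / 4 : ℝ) = (1 / 2) ^ 2 by norm_num, Real.sqrt_sq (by norm_num)]
    rw [hs]
    have h1 := h.abs_mul_norm_le t
    have h2 : ‖y‖ ≤ ‖y + t • x‖ + |t| * ‖x‖ := by
      simpa [norm_smul] using norm_sub_le (y + t • x) (t • x)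
    linarith
end

section
/- Let X be a reflexive real Banach space, Y a real normed linear space, and let T, A : X → Y be compact linear operators with ‖T‖ = ‖A‖ = 1. Suppose the set 𝒜 = {x ∈ S_X : Tx ≠ λ·Ax for all real λ} is nonempty and that A ⊥_B T (in the operator norm). Then, with α = sup_{x ∈ 𝒜} inf_{λ ∈ ℝ} ‖Tx + λ·Ax‖, one has 0 < α ≤ 1 and ‖T + λ·A‖ ≥ α for every real λ (i.e., T ⊥_D^ε A where √(1−ε²) = α). -/
/-!
Every unit vector `x` satisfies `⨅ t, ‖T x + t • A x‖ ≤ ‖T x + s • A x‖ ≤ ‖T + s • A‖` for each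
real `s`. Taking the supremum over `x ∈ 𝒜` gives `α ≤ ‖T + s • A‖`, and `s = 0` gives
`α ≤ ‖T‖ = 1`. For positivity, pick `x ∈ 𝒜`: the vector `T x` lies outside the line spanned by
`A x`, which is closed (being finite-dimensional), so its distance from that line is positive,
and this distance bounds `⨅ t, ‖T x + t • A x‖` from below (`iInf_norm_add_smul_pos`).
-/

open Set Metric

/-- A vector off the line `ℝ v` has positive distance from it. -/
lemma iInf_norm_add_smul_pos {E : Type*} [NormedAddCommGroup E] [NormedSpace ℝ E] {u v : E}
    (h : ∀ l : ℝ, u ≠ l • v) : 0 < ⨅ t : ℝ, ‖u + t • v‖ := by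
  have hclosed : IsClosed ((ℝ ∙ v : Submodule ℝ E) : Set E) :=
    Submodule.closed_of_finiteDimensional _
  have hmem : u ∉ ((ℝ ∙ v : Submodule ℝ E) : Set E) := by
    intro hu
    obtain ⟨l, hl⟩ := Submodule.mem_span_singleton.1 hu
    exact h l hl.symm
  have hpos := (hclosed.notMem_iff_infDist_pos ⟨0, Submodule.zero_mem _⟩).1 hmem
  refine hpos.trans_le (le_ciInf fun t => ?_)
  have hle : infDist u ((ℝ ∙ v : Submodule ℝ E) : Set E) ≤ dist u ((-t) • v) :=
    infDist_le_dist_of_mem (Submodule.smul_mem _ _ (Submodule.mem_span_singleton_self v))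
  simpa [dist_eq_norm] using hle

theorem stmt_3 {X Y : Type*} [NormedAddCommGroup X] [NormedSpace ℝ X] [CompleteSpace X]
    [NormedAddCommGroup Y] [NormedSpace ℝ Y]
    (hrefl : Function.Surjective (NormedSpace.inclusionInDoubleDual ℝ X))
    (T A : X →L[ℝ] Y) (hTcpt : IsCompactOperator T) (hAcpt : IsCompactOperator A)
    (hT : ‖T‖ = 1) (hA : ‖A‖ = 1)
    (𝒜 : Set X) (h𝒜 : 𝒜 = {x : X | ‖x‖ = 1 ∧ ∀ l : ℝ, T x ≠ l • A x})
    (hne : 𝒜.Nonempty) (horth : BJOrth A T)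
    (α : ℝ) (hα : α = ⨆ x : 𝒜, ⨅ t : ℝ, ‖T x + t • A x‖) :
    0 < α ∧ α ≤ 1 ∧ ∀ t : ℝ, α ≤ ‖T + t • A‖ := by
  have hle : ∀ (x : 𝒜) (s : ℝ), ⨅ t : ℝ, ‖T x + t • A x‖ ≤ ‖T + s • A‖ := by
    rintro ⟨x, hx⟩ s
    rw [h𝒜] at hx
    calc ⨅ t : ℝ, ‖T x + t • A x‖ ≤ ‖T x + s • A x‖ :=
          ciInf_le ⟨0, by rintro _ ⟨t, rfl⟩; exact norm_nonneg _⟩ s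
      _ = ‖(T + s • A) x‖ := by simp
      _ ≤ ‖T + s • A‖ := (T + s • A).unit_le_opNorm x hx.1.le
  have : Nonempty 𝒜 := hne.to_subtype
  have hbound : ∀ s : ℝ, α ≤ ‖T + s • A‖ := fun s => hα ▸ ciSup_le fun x => hle x s
  refine ⟨?_, by simpa [hT] using hbound 0, hbound⟩
  obtain ⟨x, hx⟩ := hne
  have hx' := hx
  rw [h𝒜] at hx'
  rw [hα]
  refine (iInf_norm_add_smul_pos hx'.2).trans_le ?_
  exact le_ciSup (f := fun x : 𝒜 => ⨅ t : ℝ, ‖T x + t • A x‖)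
    ⟨‖T + (0 : ℝ) • A‖, by rintro _ ⟨y, rfl⟩; exact hle y 0⟩ ⟨x, hx⟩
end

section
/- Let X and Y be finite-dimensional real Banach spaces and let T, A : X → Y be linear operators with ‖T‖ = ‖A‖ = 1. Let 𝒜 = {x ∈ S_X : Tx ≠ λ·Ax for all real λ}. If A ⊥_B T (in the operator norm), then 𝒜 is nonempty and, with α = sup_{x ∈ 𝒜} inf_{λ ∈ ℝ} ‖Tx + λ·Ax‖, one has 0 < α ≤ 1 and ‖T + λ·A‖ ≥ α for every real λ (i.e., T ⊥_D^ε A where √(1−ε²) = α). -/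
/-!
If `𝒜` were empty, `T x` would be a multiple of `A x` for every `x`, and a pointwise multiple of a
nonzero linear map is a global one: `T = c • A` (`eq_smul_of_pointwise_smul`). As `T ≠ 0`, the
combination `A - c⁻¹ • T` vanishes, contradicting `A ⊥_B T`.

For `x ∈ 𝒜` the infimum of `‖T x + t • A x‖` is the distance from `T x` to the line spanned by
`A x`, which is closed and misses `T x`; hence the infimum, and so `α`, is positive. Since `‖x‖ = 1`,
each of these infima is at most `‖T + t • A‖` for every `t`, which gives `α ≤ ‖T + t • A‖`;
the case `t = 0` is `α ≤ 1`.
-/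

open Set Metric

/-- If `T x` is a multiple of `A x` for every `x`, the factor can be chosen independently of `x`. -/
theorem eq_smul_of_pointwise_smul {X Y : Type*} [NormedAddCommGroup X] [NormedSpace ℝ X]
    [NormedAddCommGroup Y] [NormedSpace ℝ Y] (T A : X →L[ℝ] Y) (hA : A ≠ 0)
    (h : ∀ x, ∃ l : ℝ, T x = l • A x) : ∃ c : ℝ, T = c • A := by
  obtain ⟨x₀, hx₀⟩ : ∃ x₀, A x₀ ≠ 0 := by
    by_contra! h0
    exact hA (ContinuousLinearMap.ext h0)
  obtain ⟨c, hc⟩ := h x₀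
  refine ⟨c, ContinuousLinearMap.ext fun x => ?_⟩
  obtain ⟨l, hl⟩ := h x
  -- Comparing the factors at `x`, `x₀` and `x + x₀` gives a linear relation of `A x` and `A x₀`.
  obtain ⟨m, hm⟩ := h (x + x₀)
  have hrel : (m - l) • A x = (c - m) • A x₀ := by
    rw [map_add, map_add, hl, hc, smul_add] at hm
    rw [sub_smul, sub_smul, sub_eq_sub_iff_add_eq_add, ← hm, add_comm]
  change T x = c • A x
  by_cases hml : m = l
  · subst hml
    rw [sub_self, zero_smul, eq_comm, smul_eq_zero] at hrel
    rw [hl, sub_eq_zero.mp (hrel.resolve_right hx₀)]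
  · have hml' : m - l ≠ 0 := sub_ne_zero.mpr hml
    obtain ⟨k, hk⟩ : ∃ k : ℝ, A x = k • A x₀ :=
      ⟨(m - l)⁻¹ * (c - m), by rw [mul_smul, ← hrel, inv_smul_smul₀ hml']⟩
    -- `x - k • x₀` lies in the kernel of `A`, hence in that of `T`.
    obtain ⟨n, hn⟩ := h (x - k • x₀)
    rw [map_sub, map_sub, map_smul, map_smul, hk, sub_self, smul_zero, sub_eq_zero] at hn
    rw [hn, hc, hk, smul_comm]

theorem stmt_4 {X Y : Type*} [NormedAddCommGroup X] [NormedSpace ℝ X]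
    [FiniteDimensional ℝ X]
    [NormedAddCommGroup Y] [NormedSpace ℝ Y] [FiniteDimensional ℝ Y]
    (T A : X →L[ℝ] Y) (hT : ‖T‖ = 1) (hA : ‖A‖ = 1)
    (𝒜 : Set X) (h𝒜 : 𝒜 = {x : X | ‖x‖ = 1 ∧ ∀ l : ℝ, T x ≠ l • A x})
    (horth : BJOrth A T)
    (α : ℝ) (hα : α = ⨆ x : 𝒜, ⨅ t : ℝ, ‖T x + t • A x‖) :
    𝒜.Nonempty ∧ 0 < α ∧ α ≤ 1 ∧ ∀ t : ℝ, α ≤ ‖T + t • A‖ := by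
  have hT0 : T ≠ 0 := by
    rintro rfl
    simp at hT
  have hA0 : A ≠ 0 := by
    rintro rfl
    simp at hA
  have hne : 𝒜.Nonempty := by
    by_contra hemp
    rw [not_nonempty_iff_eq_empty] at hemp
    have hpt : ∀ x, ∃ l : ℝ, T x = l • A x := by
      intro x
      by_cases hx : x = 0
      · exact ⟨0, by simp [hx]⟩
      by_contra! hcon
      have hxn : ‖x‖ ≠ 0 := norm_ne_zero_iff.mpr hx
      have hmem : ‖x‖⁻¹ • x ∈ 𝒜 := by
        rw [h𝒜]
        refine ⟨by rw [norm_smul, norm_inv, norm_norm, inv_mul_cancel₀ hxn], fun l hl => ?_⟩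
        rw [map_smul, map_smul, smul_comm l] at hl
        exact hcon l (smul_right_injective Y (inv_ne_zero hxn) hl)
      simp [hemp] at hmem
    obtain ⟨c, hc⟩ := eq_smul_of_pointwise_smul T A hA0 hpt
    have hc0 : c ≠ 0 := by
      rintro rfl
      exact hT0 (by rw [hc, zero_smul])
    have h1 := horth (-c⁻¹)
    rw [hc, neg_smul, inv_smul_smul₀ hc0, add_neg_cancel, norm_zero, hA] at h1
    linarith
  have hbdd : ∀ x : X, BddBelow (range fun t : ℝ => ‖T x + t • A x‖) := fun x =>
    ⟨0, by rintro _ ⟨t, rfl⟩; exact norm_nonneg _⟩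
  have hle : ∀ (t : ℝ) (x : 𝒜), ⨅ s : ℝ, ‖T x + s • A x‖ ≤ ‖T + t • A‖ := by
    rintro t ⟨x, hx⟩
    rw [h𝒜] at hx
    refine (ciInf_le (hbdd x) t).trans ?_
    simpa [hx.1] using (T + t • A).le_opNorm x
  have : Nonempty 𝒜 := hne.to_subtype
  have hα_le : ∀ t : ℝ, α ≤ ‖T + t • A‖ := fun t => hα ▸ ciSup_le (hle t)
  refine ⟨hne, ?_, by simpa [hT] using hα_le 0, hα_le⟩
  obtain ⟨x, hx⟩ := hne
  have hx' := hx
  rw [h𝒜] at hx'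
  have hclosed : IsClosed (Submodule.span ℝ {A x} : Set Y) :=
    Submodule.closed_of_finiteDimensional _
  have hnot : T x ∉ (Submodule.span ℝ {A x} : Set Y) := fun hmem => by
    obtain ⟨l, hl⟩ := Submodule.mem_span_singleton.mp hmem
    exact hx'.2 l hl.symm
  have hpos := (hclosed.notMem_iff_infDist_pos ⟨0, Submodule.zero_mem _⟩).mp hnot
  have hinf : infDist (T x) (Submodule.span ℝ {A x} : Set Y) ≤ ⨅ t : ℝ, ‖T x + t • A x‖ := by
    refine le_ciInf fun t => ?_
    have hmem : (-t) • A x ∈ (Submodule.span ℝ {A x} : Set Y) :=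
      Submodule.smul_mem _ _ (Submodule.mem_span_singleton_self _)
    simpa [dist_eq_norm] using infDist_le_dist_of_mem (x := T x) hmem
  have hsup : ⨅ t : ℝ, ‖T x + t • A x‖ ≤ α := by
    rw [hα]
    exact le_ciSup (f := fun x : 𝒜 => ⨅ t : ℝ, ‖T x + t • A x‖)
      ⟨‖T + (0 : ℝ) • A‖, by rintro _ ⟨y, rfl⟩; exact hle 0 y⟩ ⟨x, hx⟩
  exact hpos.trans_le (hinf.trans hsup)
end

section
/- Let X be a reflexive real Banach space, Y a real normed linear space, and let T, A : X → Y be compact linear operators with ‖T‖ = ‖A‖ = 1 such that at least one of A and T is injective. Let 𝒜 = {x ∈ S_X : Tx ≠ λ·Ax for all real λ}. If A ⊥_B T (in the operator norm), then 𝒜 is nonempty and, with α = sup_{x ∈ 𝒜} inf_{λ ∈ ℝ} ‖Tx + λ·Ax‖, one has 0 < α ≤ 1 and ‖T + λ·A‖ ≥ α for every real λ (i.e., T ⊥_D^ε A where √(1−ε²) = α). -/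
/-!
If `𝒜` were empty, `T x` would be a multiple of `A x` for every `x`. Then `A` is injective: if it is
`T` that is assumed injective, `A x = 0` forces `T x = 0`. A linear map that is pointwise a multiple
of an injective one is a global multiple of it (`eq_smul_of_pointwise`), so `T = a • A` with
`a ≠ 0`, and `A + (-a⁻¹) • T = 0` contradicts `A ⊥_B T`.

For each `x ∈ 𝒜` the inner infimum is positive, being at least the distance from `T x` to the closed
line (or point) `ℝ ∙ A x` (`iInf_norm_pos`); hence `0 < α`. The bound `α ≤ ‖T + t • A‖` holds
vector by vector, and `t = 0` gives `α ≤ 1`.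
-/


open Set Metric

/-- Pointwise proportionality to an injective map is global: comparing the factors at a fixed
`x₀ ≠ 0`, at `y` and at `x₀ + y` shows that they agree or that `y` is a multiple of `x₀`. -/
lemma eq_smul_of_pointwise {X Y : Type*} [NormedAddCommGroup X] [NormedSpace ℝ X]
    [NormedAddCommGroup Y] [NormedSpace ℝ Y] (T A : X →L[ℝ] Y)
    (hA : Function.Injective A) (h : ∀ x, ∃ l : ℝ, T x = l • A x) :
    ∃ a : ℝ, T = a • A := by
  by_cases hX : ∃ x₀ : X, x₀ ≠ 0
  · obtain ⟨x₀, hx₀⟩ := hX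
    obtain ⟨a, ha⟩ := h x₀
    refine ⟨a, ContinuousLinearMap.ext fun y => ?_⟩
    obtain ⟨b, hb⟩ := h y
    obtain ⟨c, hc⟩ := h (x₀ + y)
    have key : (c - a) • x₀ = (b - c) • y := by
      apply hA
      rw [map_add, map_add, ha, hb, smul_add] at hc
      rw [map_smul, map_smul, sub_smul, sub_smul, sub_eq_sub_iff_add_eq_add]
      exact hc.symm.trans (add_comm _ _)
    by_cases hbc : b = c
    · subst hbc
      rw [sub_self, zero_smul, smul_eq_zero, sub_eq_zero] at key
      rw [hb, key.resolve_right hx₀]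
      rfl
    · have hy : y = ((b - c)⁻¹ * (c - a)) • x₀ := by
        rw [mul_smul, key, inv_smul_smul₀ (sub_ne_zero.mpr hbc)]
      rw [hy, smul_apply, map_smul, map_smul, ha, smul_comm]
  · push Not at hX
    exact ⟨0, ContinuousLinearMap.ext fun y => by simp [hX y]⟩

lemma iInf_norm_pos {Y : Type*} [NormedAddCommGroup Y] [NormedSpace ℝ Y] (u v : Y)
    (h : ∀ l : ℝ, u ≠ l • v) : 0 < ⨅ t : ℝ, ‖u + t • v‖ := by
  have hcl : IsClosed ((Submodule.span ℝ {v} : Submodule ℝ Y) : Set Y) :=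
    Submodule.closed_of_finiteDimensional _
  have hu : u ∉ ((Submodule.span ℝ {v} : Submodule ℝ Y) : Set Y) := by
    intro hu
    obtain ⟨l, hl⟩ := Submodule.mem_span_singleton.mp hu
    exact h l hl.symm
  refine ((hcl.notMem_iff_infDist_pos ⟨0, Submodule.zero_mem _⟩).mp hu).trans_le
    (le_ciInf fun t => ?_)
  have hm : (-t) • v ∈ ((Submodule.span ℝ {v} : Submodule ℝ Y) : Set Y) :=
    Submodule.mem_span_singleton.mpr ⟨-t, rfl⟩
  simpa [dist_eq_norm] using Metric.infDist_le_dist_of_mem (x := u) hm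

theorem stmt_5 {X Y : Type*} [NormedAddCommGroup X] [NormedSpace ℝ X] [CompleteSpace X]
    [NormedAddCommGroup Y] [NormedSpace ℝ Y]
    (hrefl : Function.Surjective (NormedSpace.inclusionInDoubleDual ℝ X))
    (T A : X →L[ℝ] Y) (hTcpt : IsCompactOperator T) (hAcpt : IsCompactOperator A)
    (hT : ‖T‖ = 1) (hA : ‖A‖ = 1)
    (hinj : Function.Injective A ∨ Function.Injective T)
    (𝒜 : Set X) (h𝒜 : 𝒜 = {x : X | ‖x‖ = 1 ∧ ∀ l : ℝ, T x ≠ l • A x})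
    (horth : BJOrth A T)
    (α : ℝ) (hα : α = ⨆ x : 𝒜, ⨅ t : ℝ, ‖T x + t • A x‖) :
    𝒜.Nonempty ∧ 0 < α ∧ α ≤ 1 ∧ ∀ t : ℝ, α ≤ ‖T + t • A‖ := by
  have hne : 𝒜.Nonempty := by
    by_contra hempty
    have hall : ∀ x, ∃ l : ℝ, T x = l • A x := by
      intro x
      by_cases hx : x = 0
      · exact ⟨0, by simp [hx]⟩
      have hn : ‖x‖ ≠ 0 := norm_ne_zero_iff.mpr hx
      by_contra hno
      push Not at hno
      refine hempty ⟨‖x‖⁻¹ • x, ?_⟩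
      rw [h𝒜]
      refine ⟨by rw [norm_smul, norm_inv, norm_norm, inv_mul_cancel₀ hn], fun l hl => hno l ?_⟩
      rw [map_smul, map_smul, smul_comm l] at hl
      exact smul_right_injective Y (inv_ne_zero hn) hl
    have hAinj : Function.Injective A := by
      rcases hinj with h | h
      · exact h
      · rw [injective_iff_map_eq_zero]
        intro x hx
        obtain ⟨l, hl⟩ := hall x
        rw [hx, smul_zero] at hl
        exact (injective_iff_map_eq_zero T).mp h x hl
    obtain ⟨a, rfl⟩ := eq_smul_of_pointwise T A hAinj hall
    have ha : a ≠ 0 := by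
      rintro rfl
      simp at hT
    have := horth (-a⁻¹)
    rw [smul_smul, neg_mul, inv_mul_cancel₀ ha, neg_one_smul, add_neg_cancel, hA, norm_zero] at this
    linarith
  have hbdd : ∀ (t : ℝ) (x : 𝒜), ⨅ s : ℝ, ‖T x + s • A x‖ ≤ ‖T + t • A‖ := by
    intro t x
    have hx : ‖(x : X)‖ = 1 := (h𝒜.subset x.2).1
    refine (ciInf_le ⟨0, ?_⟩ t).trans ?_
    · rintro _ ⟨s, rfl⟩
      exact norm_nonneg _
    · simpa [hx] using (T + t • A).le_opNorm (x : X)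
  have : Nonempty 𝒜 := hne.to_subtype
  have hle : ∀ t : ℝ, α ≤ ‖T + t • A‖ := fun t => hα ▸ ciSup_le (hbdd t)
  refine ⟨hne, ?_, ?_, hle⟩
  · obtain ⟨x, hx⟩ := hne
    rw [hα]
    refine (iInf_norm_pos (T x) (A x) (h𝒜.subset hx).2).trans_le
      (le_ciSup (f := fun x : 𝒜 => ⨅ t : ℝ, ‖T x + t • A x‖) ⟨‖T + (0 : ℝ) • A‖, ?_⟩ ⟨x, hx⟩)
    rintro _ ⟨y, rfl⟩
    exact hbdd 0 y
  · simpa [hT] using hle 0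
end

section
/- Let n ≥ 2 and let X = ℝⁿ equipped with the supremum norm ‖·‖_∞. Let x ∈ S_X be a smooth point (i.e., J(x) is a singleton; equivalently, exactly one coordinate of x has absolute value 1). Then x is C-approximately left-symmetric (there exists ε ∈ [0,1) such that for every y ∈ X, x ⊥_B y implies y ⊥_B^ε x), but x is not C-approximately right-symmetric (for every ε ∈ [0,1) there exists y ∈ X with y ⊥_B x and not x ⊥_B^ε y). -/
/-!
Let `i` be the unique coordinate with `|x i| = 1` and let `m < 1` bound the other `|x j|`.

* Left symmetry: `x ⊥_B y` forces `y i = 0` (`BJOrth.apply_eq_zero`), since otherwise a small step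
  along `y` that decreases the `i`-th coordinate decreases the norm. So `y` attains its norm at some
  `j ≠ i`, and `(y j + t * x j) ^ 2 ≥ ‖y‖ ^ 2 - 2 * m * ‖y‖ * |t|` shows that `ε = m` works.
* Failure of right symmetry: take `y i = x i` and `y k = ±1` with sign opposite to `x k` for
  `k ≠ i`. For `t ≥ 0` the `i`-th coordinate of `y + t • x` has modulus at least `1`, for `t ≤ 0`
  any other one does, so `y ⊥_B x`. On the other hand `‖x - s • y‖ = 1 - s` for small `s > 0`,
  and `(1 - s) ^ 2 < 1 - 2 * ε * s` once `s < 2 * (1 - ε)`.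
-/

open Set Metric

/-- The coordinates other than the norming one are bounded away from `1`. -/
lemma exists_bound_off_peak {n : ℕ} (hn : 2 ≤ n) {x : Fin n → ℝ} (hx : ‖x‖ = 1) {i : Fin n}
    (hu : ∀ j, |x j| = 1 → j = i) :
    (∃ j, j ≠ i) ∧ ∃ m : ℝ, 0 ≤ m ∧ m < 1 ∧ ∀ j, j ≠ i → |x j| ≤ m := by
  have : Nontrivial (Fin n) := Fin.nontrivial_iff_two_le.mpr hn
  obtain ⟨j, hj⟩ := exists_ne i
  refine ⟨⟨j, hj⟩, ?_⟩
  obtain ⟨k, hk, hmax⟩ := Finset.exists_max_image (Finset.univ.erase i) (fun j => |x j|)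
    ⟨j, by simp [hj]⟩
  refine ⟨|x k|, abs_nonneg _, lt_of_le_of_ne ?_ fun h => ?_, fun l hl => hmax l (by simp [hl])⟩
  · simpa [hx] using norm_le_pi_norm x k
  · exact (Finset.ne_of_mem_erase hk) (hu k h)

lemma BJOrth.apply_eq_zero {n : ℕ} {x y : Fin n → ℝ} (hx : ‖x‖ = 1) {i : Fin n}
    (hi : |x i| = 1) {m : ℝ} (hm0 : 0 ≤ m) (hm1 : m < 1) (hm : ∀ j, j ≠ i → |x j| ≤ m)
    (h : BJOrth x y) : y i = 0 := by
  by_contra hy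
  have hyM : ∀ j, |y j| ≤ ‖y‖ := fun j => norm_le_pi_norm y j
  have hyi : 0 < |y i| := abs_pos.mpr hy
  have hM : 0 < ‖y‖ := hyi.trans_le (hyM i)
  -- The step is `t = -s * x i * y i`, with `s` chosen so that `s * ‖y‖ ^ 2 = (1 - m) / 2`.
  obtain ⟨s, hs, hsM⟩ : ∃ s : ℝ, 0 < s ∧ s * ‖y‖ ^ 2 = (1 - m) / 2 :=
    ⟨(1 - m) / 2 / ‖y‖ ^ 2, by have := sub_pos.mpr hm1; positivity, by field_simp⟩
  have hlt : ‖x + (-s * x i * y i) • y‖ < 1 := by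
    rw [pi_norm_lt_iff one_pos]
    intro j
    simp only [Pi.add_apply, Pi.smul_apply, smul_eq_mul, Real.norm_eq_abs]
    by_cases hj : j = i
    · subst hj
      have h1 : x j + -s * x j * y j * y j = x j * (1 - s * y j ^ 2) := by ring
      have h2 : y j ^ 2 ≤ ‖y‖ ^ 2 := by
        rw [← sq_abs]; exact pow_le_pow_left₀ (abs_nonneg _) (hyM j) 2
      have h3 : s * y j ^ 2 ≤ s * ‖y‖ ^ 2 := mul_le_mul_of_nonneg_left h2 hs.le
      have h4 : 0 < s * y j ^ 2 := by positivity
      rw [h1, abs_mul, hi, one_mul, abs_lt]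
      constructor <;> linarith
    · have h1 : |-s * x i * y i * y j| ≤ s * ‖y‖ ^ 2 := by
        rw [abs_mul, abs_mul, abs_mul, abs_neg, hi, abs_of_pos hs, mul_one, mul_assoc, sq]
        gcongr
        · exact hyM i
        · exact hyM j
      have := abs_add_le (x j) (-s * x i * y i * y j)
      have := hm j hj
      linarith
  have := h (-s * x i * y i)
  linarith

theorem stmt_6 (n : ℕ) (hn : 2 ≤ n)
    (x : Fin n → ℝ) (hx : ‖x‖ = 1) (hsm : ∃! i : Fin n, |x i| = 1) :
    (∃ ε ∈ Set.Ico (0 : ℝ) 1, ∀ y : Fin n → ℝ, BJOrth x y → BOrth ε y x) ∧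
    (∀ ε ∈ Set.Ico (0 : ℝ) 1, ∃ y : Fin n → ℝ, BJOrth y x ∧ ¬ BOrth ε x y) := by
  obtain ⟨i, hi, hu⟩ := hsm
  simp only at hi hu
  obtain ⟨⟨j, hj⟩, m, hm0, hm1, hm⟩ := exists_bound_off_peak hn hx hu
  have hxi : x i ^ 2 = 1 := by rw [← sq_abs, hi, one_pow]
  constructor
  · refine ⟨m, ⟨hm0, hm1⟩, fun y hxy t => ?_⟩
    have hyi := hxy.apply_eq_zero hx hi hm0 hm1 hm
    obtain ⟨k, -, hk⟩ := Finset.exists_max_image Finset.univ (fun k => |y k|) ⟨i, by simp⟩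
    have hyk : ‖y‖ = |y k| := le_antisymm
      ((pi_norm_le_iff_of_nonneg (abs_nonneg _)).mpr fun l => hk l (by simp))
      (norm_le_pi_norm y k)
    rw [norm_smul, hx, mul_one, Real.norm_eq_abs]
    by_cases hki : k = i
    · have h0 : ‖y‖ = 0 := by rw [hyk, hki, hyi, abs_zero]
      rw [h0]
      nlinarith [sq_nonneg ‖y + t • x‖]
    · have h1 : |y k + t * x k| ≤ ‖y + t • x‖ := norm_le_pi_norm (y + t • x) k
      have h2 : (y k + t * x k) ^ 2 ≤ ‖y + t • x‖ ^ 2 := by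
        rw [← sq_abs (y k + t * x k)]; exact pow_le_pow_left₀ (abs_nonneg _) h1 2
      have h3 : |y k * t * x k| ≤ |y k| * |t| * m := by
        rw [abs_mul, abs_mul]
        exact mul_le_mul_of_nonneg_left (hm k hki) (by positivity)
      have h4 := neg_abs_le (y k * t * x k)
      rw [hyk, sq_abs]
      nlinarith [sq_nonneg (t * x k)]
  · rintro ε ⟨hε0, hε1⟩
    let y : Fin n → ℝ := fun k => if k = i then x i else if 0 ≤ x k then -1 else 1
    have hyi : y i = x i := by simp [y]
    have hyk : ∀ k, |y k| = 1 := by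
      intro k
      simp only [y]
      split_ifs <;> simp [hi]
    have hyj : y j * x j ≤ 0 := by
      simp only [y, if_neg hj]
      split_ifs <;> linarith
    have hy : ‖y‖ ≤ 1 := (pi_norm_le_iff_of_nonneg zero_le_one).mpr fun k => (hyk k).le
    have hy' : ‖y‖ = 1 := le_antisymm hy ((hyk i).symm.le.trans (norm_le_pi_norm y i))
    refine ⟨y, fun t => ?_, fun h => ?_⟩
    · -- It suffices that some coordinate has `y k * (t * x k) ≥ 0`.
      have key : ∀ k, 0 ≤ y k * (t * x k) → ‖y‖ ≤ ‖y + t • x‖ := by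
        intro k hk
        refine hy.trans (le_trans ?_ (norm_le_pi_norm (y + t • x) k))
        simp only [Pi.add_apply, Pi.smul_apply, smul_eq_mul, Real.norm_eq_abs]
        have : y k ^ 2 = 1 := by rw [← sq_abs, hyk, one_pow]
        rw [← one_le_sq_iff_one_le_abs]
        nlinarith [sq_nonneg (t * x k)]
      rcases le_total 0 t with ht | ht
      · exact key i (by rw [hyi]; nlinarith)
      · exact key j (by nlinarith)
    · -- The step `s` satisfies both `m + s ≤ 1 - s` and `s < 2 * (1 - ε)`.
      obtain ⟨s, hs, hsm, hsε⟩ : ∃ s : ℝ, 0 < s ∧ 2 * s ≤ 1 - m ∧ s < 2 * (1 - ε) :=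
        ⟨min ((1 - m) / 2) (1 - ε), lt_min (by linarith) (by linarith),
          by linarith [min_le_left ((1 - m) / 2) (1 - ε)],
          by linarith [min_le_right ((1 - m) / 2) (1 - ε)]⟩
      have hle : ‖x + (-s) • y‖ ≤ 1 - s := by
        rw [pi_norm_le_iff_of_nonneg (by linarith)]
        intro k
        simp only [Pi.add_apply, Pi.smul_apply, smul_eq_mul, Real.norm_eq_abs]
        by_cases hk : k = i
        · subst hk
          have h1 : x k + -s * y k = x k * (1 - s) := by rw [hyi]; ring
          rw [h1, abs_mul, hi, one_mul, abs_of_nonneg (by linarith)]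
        · have h1 := abs_add_le (x k) (-s * y k)
          rw [abs_mul, hyk, abs_neg, abs_of_pos hs] at h1
          linarith [hm k hk]
      have h1 := h (-s)
      rw [norm_smul, hx, hy', norm_neg, Real.norm_eq_abs, abs_of_pos hs] at h1
      have h2 := pow_le_pow_left₀ (norm_nonneg _) hle 2
      nlinarith
end

section
/- Let n ≥ 2 and let X = ℝⁿ equipped with the supremum norm ‖·‖_∞. Let x be an extreme point of the closed unit ball of X (i.e., every coordinate of x has absolute value 1). Then x is right-symmetric: for every y ∈ X, y ⊥_B x implies x ⊥_B y (in particular x is C-approximately right-symmetric). However, x is not C-approximately left-symmetric: for every ε ∈ [0,1) there exists y ∈ X with x ⊥_B y and not y ⊥_B^ε x. -/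
/-!
Since `|x i| = 1`, the coordinates satisfy `|x i + t * y i| = |1 + t * (x i * y i)|`, so everything
depends only on the numbers `x i * y i`.

Right symmetry: if `‖x + t • y‖ < 1`, put `δ = 1 - ‖x + t • y‖ > 0`. Then `t * (x i * y i) ≤ -δ` for
every `i`, so adding `δ • x` to `t • y` shrinks every coordinate by `δ` in absolute value, and `y`
is not orthogonal to `x`.

Failure of left symmetry: let `y` be `x` with one coordinate replaced by `0`. That coordinate of
`x + t • y` is unchanged, so `x ⊥_B y`. For `0 < s ≤ 1 / 2` one has `‖y - s • x‖ ≤ 1 - s`, and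
`s = (1 - ε) / 2` gives `(1 - s) ^ 2 < 1 - 2 * ε * s`.
-/

open Set Metric

theorem norm_eq_one_of_abs_eq_one {n : ℕ} (hn : 2 ≤ n) {x : Fin n → ℝ}
    (hx : ∀ i, |x i| = 1) : ‖x‖ = 1 := by
  apply le_antisymm
  · rw [pi_norm_le_iff_of_nonneg zero_le_one]
    intro i
    rw [Real.norm_eq_abs, hx i]
  · have h := norm_le_pi_norm x ⟨0, by omega⟩
    rwa [Real.norm_eq_abs, hx] at h

theorem right_symmetric {n : ℕ} (hn : 2 ≤ n) {x : Fin n → ℝ} (hx : ∀ i, |x i| = 1)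
    {y : Fin n → ℝ} (h : BJOrth y x) : BJOrth x y := by
  intro t
  rw [norm_eq_one_of_abs_eq_one hn hx]
  by_contra! hlt
  have ht : t ≠ 0 := by
    rintro rfl
    simp [norm_eq_one_of_abs_eq_one hn hx] at hlt
  obtain ⟨δ, hδ⟩ : ∃ δ, δ = 1 - ‖x + t • y‖ := ⟨_, rfl⟩
  have hδ0 : 0 < δ := by linarith
  have hcoord (i : Fin n) : |t * y i + δ * x i| ≤ ‖t • y‖ - δ := by
    have h1 : |x i + t * y i| ≤ 1 - δ := by
      have := norm_le_pi_norm (x + t • y) i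
      simp only [Pi.add_apply, Pi.smul_apply, smul_eq_mul, Real.norm_eq_abs] at this
      linarith
    have h2 : |t * y i| ≤ ‖t • y‖ := norm_le_pi_norm (t • y) i
    rw [abs_le] at h1 h2 ⊢
    rcases eq_or_eq_neg_of_abs_eq (hx i) with hi | hi <;> rw [hi] at h1 ⊢ <;>
      constructor <;> linarith
  have hle : ‖t • y + δ • x‖ ≤ ‖t • y‖ - δ := by
    rw [pi_norm_le_iff_of_nonneg ((abs_nonneg _).trans (hcoord ⟨0, by omega⟩))]
    exact hcoord
  -- Orthogonality is tested at `δ / t`, which amounts to comparing `t • y` with `t • y + δ • x`.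
  have hmul : t • y + δ • x = t • (y + (δ / t) • x) := by
    rw [smul_add, smul_smul, mul_div_cancel₀ _ ht]
  rw [hmul, norm_smul, norm_smul] at hle
  have := mul_le_mul_of_nonneg_left (h (δ / t)) (norm_nonneg t)
  linarith

theorem not_left_symmetric {n : ℕ} (hn : 2 ≤ n) {x : Fin n → ℝ} (hx : ∀ i, |x i| = 1)
    {ε : ℝ} (h0 : 0 ≤ ε) (h1 : ε < 1) : ∃ y : Fin n → ℝ, BJOrth x y ∧ ¬ BOrth ε y x := by
  have hxn := norm_eq_one_of_abs_eq_one hn hx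
  let k : Fin n := ⟨0, by omega⟩
  let l : Fin n := ⟨1, by omega⟩
  have hlk : l ≠ k := by simp [l, k]
  refine ⟨Function.update x k 0, fun t => ?_, fun h => ?_⟩
  · have := norm_le_pi_norm (x + t • Function.update x k 0) k
    simpa [hxn, hx k] using this
  · have hy : ‖Function.update x k 0‖ = 1 := by
      apply le_antisymm
      · rw [pi_norm_le_iff_of_nonneg zero_le_one]
        intro i
        by_cases hi : i = k
        · simp [hi]
        · simp [hi, hx i]
      · have := norm_le_pi_norm (Function.update x k 0) l
        simpa [hlk, hx l] using this
    obtain ⟨s, hs⟩ : ∃ s, s = (1 - ε) / 2 := ⟨_, rfl⟩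
    have hle : ‖Function.update x k 0 + (-s) • x‖ ≤ 1 - s := by
      rw [pi_norm_le_iff_of_nonneg (by linarith)]
      intro i
      by_cases hi : i = k
      · subst hi
        simp only [Pi.add_apply, Pi.smul_apply, smul_eq_mul, Function.update_self, zero_add,
          Real.norm_eq_abs, abs_mul, hx, abs_neg, mul_one]
        rw [abs_of_pos (by linarith)]
        linarith
      · have : x i + -s * x i = (1 - s) * x i := by ring
        simp only [Pi.add_apply, Pi.smul_apply, smul_eq_mul, Function.update_of_ne hi,
          Real.norm_eq_abs, this, abs_mul, hx, mul_one]
        rw [abs_of_pos (by linarith)]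
    have key := h (-s)
    rw [hy, norm_smul, hxn, norm_neg, Real.norm_of_nonneg (by linarith)] at key
    have hsq := pow_le_pow_left₀ (norm_nonneg _) hle 2
    nlinarith [mul_pos (sub_pos.2 h1) (sub_pos.2 h1)]

theorem stmt_7 (n : ℕ) (hn : 2 ≤ n)
    (x : Fin n → ℝ) (hx : ∀ i : Fin n, |x i| = 1) :
    (∀ y : Fin n → ℝ, BJOrth y x → BJOrth x y) ∧
    (∀ ε ∈ Set.Ico (0 : ℝ) 1, ∃ y : Fin n → ℝ, BJOrth x y ∧ ¬ BOrth ε y x) := by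
  exact ⟨fun _ => right_symmetric hn hx, fun _ hε => not_left_symmetric hn hx hε.1 hε.2⟩
end

section
/- Let X be a finite-dimensional real Banach space and suppose that every extreme point of the closed unit ball of X has the local property (P). Then every y ∈ S_X has the local property (P). -/
/-!
If a unit vector `y` fails the local property (P) with witness `z`, consider the face
`F = {x ∈ B_X | f x = 1 for every f ∈ J(y)}` of the closed unit ball. It is compact and contains
`y`, so by Krein-Milman it has an extreme point `x`, which is also an extreme point of the ball,
and `J(y) ⊆ J(x)` (`exists_extremePoint_suppJ_subset`). Hence every functional of `J(z)` lies in
`J(x) ∪ -J(x)`. By James' characterization, `y ⊥_B z` yields some `f ∈ J(y)` with `f z = 0`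
(`BJOrth.exists_suppJ`); as `f ∈ J(x)`, also `x ⊥_B z`. So the same `z` shows that the extreme
point `x` fails (P).
-/

open Set Metric

/-- The nontrivial half of James' characterization of Birkhoff-James orthogonality, by
Hahn-Banach in the quotient by the line spanned by `z`. -/
lemma BJOrth.exists_suppJ {X : Type*} [NormedAddCommGroup X] [NormedSpace ℝ X] {y z : X}
    (hy : ‖y‖ = 1) (h : BJOrth y z) : ∃ f ∈ SuppJ y, f z = 0 := by
  let S : Submodule ℝ X := Submodule.span ℝ {z}
  have hq : ‖S.mkQ y‖ = 1 := by
    apply le_antisymm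
    · rw [← hy]
      exact Submodule.Quotient.norm_mk_le S y
    · refine le_of_forall_pos_lt_add fun ε hε => ?_
      obtain ⟨m, hm, hlt⟩ := Submodule.Quotient.norm_mk_lt (S := S) (S.mkQ y) hε
      have hmem : m - y ∈ S := (Submodule.Quotient.eq S).1 hm
      obtain ⟨t, ht⟩ := Submodule.mem_span_singleton.1 hmem
      have := h t
      rw [ht, add_sub_cancel, hy] at this
      linarith
  obtain ⟨g, hg1, hgy⟩ := exists_dual_vector ℝ (S.mkQ y) (by rw [hq]; exact one_ne_zero)
  have hgy' : g (S.mkQ y) = 1 := by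
    rw [hgy, hq]
    rfl
  have hb : ∀ x, ‖g (S.mkQ x)‖ ≤ 1 * ‖x‖ := fun x => by
    refine (g.le_opNorm _).trans ?_
    rw [hg1]
    exact mul_le_mul_of_nonneg_left (Submodule.Quotient.norm_mk_le S x) zero_le_one
  let f : X →L[ℝ] ℝ := LinearMap.mkContinuous (g.toLinearMap ∘ₗ S.mkQ) 1 hb
  have hfy : f y = 1 := hgy'
  refine ⟨f, ⟨le_antisymm (LinearMap.mkContinuous_norm_le _ zero_le_one hb) ?_,
    by rw [hfy, hy]⟩, ?_⟩
  · have := f.le_opNorm y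
    rw [hfy, hy] at this
    simpa using this
  · have hz : S.mkQ z = 0 :=
      (Submodule.Quotient.mk_eq_zero S).2 (Submodule.mem_span_singleton_self z)
    change g (S.mkQ z) = 0
    rw [hz, map_zero]

lemma le_one_of_mem_suppJ {X : Type*} [NormedAddCommGroup X] [NormedSpace ℝ X] {y x : X}
    {f : X →L[ℝ] ℝ} (hf : f ∈ SuppJ y) (hx : x ∈ Metric.closedBall (0 : X) 1) : f x ≤ 1 := by
  have h1 : ‖x‖ ≤ 1 := by simpa using hx
  have := f.le_opNorm x
  rw [hf.1, one_mul] at this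
  exact (le_abs_self _).trans (this.trans h1)

lemma exists_extremePoint_suppJ_subset {X : Type*} [NormedAddCommGroup X] [NormedSpace ℝ X]
    [FiniteDimensional ℝ X] {y : X} (hy : ‖y‖ = 1) :
    ∃ x ∈ Set.extremePoints ℝ (Metric.closedBall (0 : X) 1), ∀ f ∈ SuppJ y, f x = 1 := by
  let B := Metric.closedBall (0 : X) 1
  let F : Set X := B ∩ {x | ∀ f ∈ SuppJ y, f x = 1}
  have hcl : IsClosed {x : X | ∀ f ∈ SuppJ y, f x = 1} := by
    simp only [Set.ofPred_forall]
    exact isClosed_iInter fun f => isClosed_iInter fun _ =>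
      isClosed_eq f.continuous continuous_const
  have : ProperSpace X := FiniteDimensional.proper ℝ X
  have hcomp : IsCompact F := (isCompact_closedBall (0 : X) 1).inter_right hcl
  have hne : F.Nonempty := ⟨y, by simp [B, hy], fun f hf => hf.2.trans hy⟩
  have hFext : IsExtreme ℝ B F := by
    refine ⟨Set.inter_subset_left, ?_⟩
    rintro u hu v hv w ⟨-, hw⟩ ⟨a, b, ha, hb, hab, rfl⟩
    refine ⟨hu, fun f hf => le_antisymm (le_one_of_mem_suppJ hf hu) ?_⟩
    have h1 := hw f hf
    have h2 := le_one_of_mem_suppJ hf hv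
    simp only [map_add, map_smul, smul_eq_mul] at h1
    by_contra! hlt
    nlinarith [mul_lt_mul_of_pos_left hlt ha, mul_le_mul_of_nonneg_left h2 hb.le]
  obtain ⟨x, hx⟩ := hcomp.extremePoints_nonempty hne
  exact ⟨x, hFext.extremePoints_subset_extremePoints hx, (extremePoints_subset hx).2⟩

theorem stmt_8 {X : Type*} [NormedAddCommGroup X] [NormedSpace ℝ X]
    [FiniteDimensional ℝ X]
    (hext : ∀ x ∈ Set.extremePoints ℝ (Metric.closedBall (0 : X) 1), LocalP x) :
    ∀ y : X, ‖y‖ = 1 → LocalP y := by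
  rintro y hy ⟨z, hz, hyz, hJ⟩
  obtain ⟨x, hx, hxJ⟩ := exists_extremePoint_suppJ_subset hy
  obtain ⟨f, hf, hfz⟩ := hyz.exists_suppJ hy
  have hxle : ‖x‖ ≤ 1 := by simpa using extremePoints_subset hx
  have hle : ∀ w, f w ≤ ‖w‖ := fun w => by
    have := f.le_opNorm w
    rw [hf.1, one_mul] at this
    exact (le_abs_self _).trans this
  have hx1 : ‖x‖ = 1 := le_antisymm hxle (hxJ f hf ▸ hle x)
  have hsub : ∀ g ∈ SuppJ y, g ∈ SuppJ x := fun g hg => ⟨hg.1, (hxJ g hg).trans hx1.symm⟩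
  refine hext x hx ⟨z, hz, fun t => ?_, fun g hg => (hJ g hg).imp (hsub g) (hsub (-g))⟩
  have := hle (x + t • z)
  simpa [hfz, hxJ f hf, hx1] using this
end

section
/- Let X be a real normed linear space and let x ∈ S_X. Then x has the local property (P) if and only if for every y ∈ S_X with x ⊥_B y there exists ε ∈ [0,1) such that y ⊥_B^ε x. -/
/-!
The theorem rests on the fact that, for unit vectors, `y ⊥_B^ε x` holds as soon as some
`f ∈ J(y)` has `|f x| ≤ ε` (`BOrth.of_mem_SuppJ`), and conversely yields such an `f`
(`BOrth.exists_mem_SuppJ`). Since `f ∈ J(y)` satisfies `f ∈ J(x)` or `-f ∈ J(x)` exactly when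
`|f x| = 1`, the local property (P) says that every unit `y` with `x ⊥_B y` admits `f ∈ J(y)`
with `|f x| < 1`, which is the claim.

For the converse fact, convexity of the norm improves `‖y + t x‖² ≥ 1 - 2ε|t|` to
`‖y + t x‖ ≥ 1 - ε|t|` (`BOrth.one_sub_le_norm`). The functional is then obtained by applying the
Hahn-Banach theorem on `X × ℝ` to the sublinear function `(z, t) ↦ ‖z + t x‖ + ε|t|`, extending
`(a y, t) ↦ a`: its values at `(±x, ∓1)` are `ε`, which controls `|f x|`.
-/

open Set Metric

section Helpers

variable {X : Type*} [NormedAddCommGroup X] [NormedSpace ℝ X]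

theorem BOrth.of_mem_SuppJ {x y : X} (hx : ‖x‖ = 1) (hy : ‖y‖ = 1) {f : X →L[ℝ] ℝ}
    (hf : f ∈ SuppJ y) : BOrth |f x| y x := by
  intro t
  have h1 : |f (y + t • x)| ≤ ‖y + t • x‖ := by
    simpa [hf.1] using f.le_opNorm (y + t • x)
  have h2 : f (y + t • x) = 1 + t * f x := by simp [hf.2, hy]
  have h3 : (1 + t * f x) ^ 2 ≤ ‖y + t • x‖ ^ 2 := by
    rw [← h2, ← sq_abs]
    gcongr
  have h4 : -(|f x| * |t|) ≤ t * f x := by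
    rw [mul_comm t, ← abs_mul]
    exact neg_abs_le _
  rw [norm_smul, hx, hy, Real.norm_eq_abs]
  nlinarith [sq_nonneg (t * f x)]

/-- Along the segment from `y` to `y + t x` the norm is at most its linear interpolation, so the
quadratic bound defining `BOrth`, applied at `l t` with `l → 0`, gives a linear one. -/
theorem BOrth.one_sub_le_norm {ε : ℝ} {x y : X} (hx : ‖x‖ = 1) (hy : ‖y‖ = 1)
    (h : BOrth ε y x) (t : ℝ) : 1 - ε * |t| ≤ ‖y + t • x‖ := by
  by_contra! hlt
  set N := ‖y + t • x‖ with hN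
  have hN0 : 0 ≤ N := norm_nonneg _
  -- `d` is the amount by which the bound fails.
  set d := 1 - ε * |t| - N with hd
  have hd0 : 0 < d := by linarith
  have key : ∀ l : ℝ, 0 < l → l ≤ 1 → 2 * d ≤ l * (N - 1) ^ 2 := by
    intro l hl hl1
    have h1 : ‖y + (l * t) • x‖ ≤ (1 - l) + l * N := by
      have e : y + (l * t) • x = (1 - l) • y + l • (y + t • x) := by module
      rw [e]
      refine (norm_add_le _ _).trans ?_
      rw [norm_smul, norm_smul, hy, Real.norm_of_nonneg hl.le,
        Real.norm_of_nonneg (by linarith : (0 : ℝ) ≤ 1 - l), mul_one]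
    have h2 := h (l * t)
    rw [norm_smul, hx, hy, Real.norm_eq_abs, abs_mul, abs_of_pos hl] at h2
    have h3 : ‖y + (l * t) • x‖ ^ 2 ≤ ((1 - l) + l * N) ^ 2 := by gcongr
    have h4 : l * (2 * d) ≤ l * (l * (N - 1) ^ 2) := by
      rw [hd]
      nlinarith
    exact le_of_mul_le_mul_left h4 hl
  have hpos : 0 < d + (N - 1) ^ 2 := by positivity
  -- This choice of `l` makes `l (N - 1)² < d`.
  have hk := key (d / (d + (N - 1) ^ 2)) (by positivity)
    ((div_le_one hpos).2 (by nlinarith [sq_nonneg (N - 1)]))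
  rw [div_mul_eq_mul_div, le_div_iff₀ hpos] at hk
  nlinarith [mul_nonneg hd0.le (sq_nonneg (N - 1)), mul_pos hd0 hd0]

theorem BOrth.exists_mem_SuppJ {ε : ℝ} (hε : 0 ≤ ε) {x y : X} (hx : ‖x‖ = 1) (hy : ‖y‖ = 1)
    (h : BOrth ε y x) : ∃ f ∈ SuppJ y, |f x| ≤ ε := by
  obtain ⟨g, -, hgy⟩ := exists_dual_vector ℝ y (by simp [hy])
  have hgy : g y = 1 := by simpa [hy] using hgy
  -- The functional `(a y, t) ↦ a` on `ℝ y × ℝ`, as a restriction of `g ∘ fst`.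
  let φ : (X × ℝ) →ₗ.[ℝ] ℝ :=
    ⟨(Submodule.span ℝ {y}).prod ⊤,
      ((g : X →ₗ[ℝ] ℝ) ∘ₗ LinearMap.fst ℝ X ℝ).domRestrict _⟩
  obtain ⟨F, hF, hFle⟩ := exists_extension_of_le_sublinear φ
    (fun p => ‖p.1 + p.2 • x‖ + ε * |p.2|)
    (by
      rintro c hc ⟨z, t⟩
      have e : c • z + (c * t) • x = c • (z + t • x) := by module
      simp only [Prod.smul_mk, smul_eq_mul]
      rw [e, norm_smul, Real.norm_of_nonneg hc.le, abs_mul, abs_of_pos hc]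
      ring)
    (by
      rintro ⟨z, t⟩ ⟨w, s⟩
      have e : z + w + (t + s) • x = (z + t • x) + (w + s • x) := by module
      simp only [Prod.mk_add_mk]
      rw [e]
      have h1 := norm_add_le (z + t • x) (w + s • x)
      have h2 := mul_le_mul_of_nonneg_left (abs_add_le t s) hε
      linarith)
    (by
      rintro ⟨⟨z, t⟩, hz⟩
      obtain ⟨a, rfl⟩ := Submodule.mem_span_singleton.1 hz.1
      have e : φ ⟨(a • y, t), hz⟩ = a := by
        change g (a • y) = a
        simp [hgy]
      rw [e]
      change a ≤ ‖a • y + t • x‖ + ε * |t|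
      rcases le_or_gt a 0 with ha | ha
      · exact ha.trans (by positivity)
      · have h1 := mul_le_mul_of_nonneg_left (h.one_sub_le_norm hx hy (t / a)) ha.le
        have e2 : a • y + t • x = a • (y + (t / a) • x) := by
          rw [smul_add, smul_smul, mul_div_cancel₀ _ ha.ne']
        rw [e2, norm_smul, Real.norm_of_nonneg ha.le]
        have e3 : a * (1 - ε * |t / a|) = a - ε * |t| := by
          rw [abs_div, abs_of_pos ha]
          field_simp
        linarith)
  have hFy : F (y, 0) = 1 :=
    (hF ⟨(y, 0), Submodule.mem_span_singleton_self y, trivial⟩).trans hgy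
  have hF1 : F (0, 1) = 0 :=
    (hF ⟨(0, 1), Submodule.zero_mem _, trivial⟩).trans (map_zero g)
  have hle : ∀ z : X, F (z, 0) ≤ ‖z‖ := fun z => by simpa using hFle (z, 0)
  let f : X →L[ℝ] ℝ := (F ∘ₗ LinearMap.inl ℝ X ℝ).mkContinuous 1 (by
    intro z
    have h2 : F (-z, 0) = -F (z, 0) := by
      rw [← map_neg]
      simp
    have h3 := hle (-z)
    rw [h2, norm_neg] at h3
    rw [one_mul, Real.norm_eq_abs]
    exact abs_le.2 ⟨by simpa using neg_le.1 h3, by simpa using hle z⟩)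
  have hf : ∀ z, f z = F (z, 0) := fun z => rfl
  refine ⟨f, ⟨le_antisymm (LinearMap.mkContinuous_norm_le _ zero_le_one _) ?_, ?_⟩, ?_⟩
  · have h1 := f.le_opNorm y
    rw [hf, hFy, hy] at h1
    simpa using h1
  · rw [hf, hFy, hy]
  · have h1 : F (x, -1) = F (x, 0) := by
      have e : ((x, -1) : X × ℝ) = (x, 0) - (0, 1) := by simp
      rw [e, map_sub, hF1, sub_zero]
    have h2 : F (-x, 1) = -F (x, 0) := by
      have e : ((-x, 1) : X × ℝ) = -(x, 0) + (0, 1) := by simp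
      rw [e, map_add, map_neg, hF1, add_zero]
    have h3 : F (x, -1) ≤ ε := by simpa using hFle (x, -1)
    have h4 : F (-x, 1) ≤ ε := by simpa using hFle (-x, 1)
    rw [hf]
    exact abs_le.2 ⟨by linarith, by linarith⟩

end Helpers

theorem stmt_9 {X : Type*} [NormedAddCommGroup X] [NormedSpace ℝ X]
    (x : X) (hx : ‖x‖ = 1) :
    LocalP x ↔
      ∀ y : X, ‖y‖ = 1 → BJOrth x y → ∃ ε ∈ Set.Ico (0 : ℝ) 1, BOrth ε y x := by
  constructor
  · intro hP y hy hxy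
    by_contra hne
    refine hP ⟨y, hy, hxy, fun f hf => ?_⟩
    by_contra! hcon
    refine hne ⟨|f x|, ⟨abs_nonneg _, lt_of_le_of_ne ?_ fun h1 => ?_⟩,
      BOrth.of_mem_SuppJ hx hy hf⟩
    · simpa [hf.1, hx] using f.le_opNorm x
    · rcases (abs_eq zero_le_one).1 h1 with h | h
      · exact hcon.1 ⟨hf.1, h.trans hx.symm⟩
      · exact hcon.2 ⟨by rw [norm_neg, hf.1], by simp [h, hx]⟩
  · rintro h ⟨y, hy, hxy, hJ⟩
    obtain ⟨ε, ⟨hε0, hε1⟩, hB⟩ := h y hy hxy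
    obtain ⟨f, hf, hfx⟩ := hB.exists_mem_SuppJ hε0 hx hy
    have h1 := abs_le.1 hfx
    rcases hJ f hf with h2 | h2
    · have := h2.2
      rw [hx] at this
      linarith
    · have := h2.2
      rw [hx, neg_apply] at this
      linarith
end

section
/- Let X be a real normed linear space and let x, y be unit vectors in X with x ⊥_B^ε y for some ε ∈ [0,1). Then there exists δ ∈ (0, 1 − ε) such that x ⊥_B^{ε+δ} z for every unit vector z with ‖z − y‖ < δ. -/
/-!
For unit vectors, `x ⊥_B^ε y` is equivalent to the linear bound `1 - ε|t| ≤ ‖x + t y‖` for all `t`.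
The linear bound is obtained from the quadratic one by convexity of the norm, comparing the two
to first order at `t = 0`; squaring gives the converse. The linear bound is stable under
perturbation of `y`: replacing `y` by `z` with `‖z - y‖ < δ` costs at most `δ|t|`, so every
`δ ∈ (0, 1 - ε)` works.
-/

open Set Metric

/-- The linear lower bound implied by `x ⊥_B^ε y` for unit vectors. -/
lemma BOrth.linear_bound {X : Type*} [NormedAddCommGroup X] [NormedSpace ℝ X]
    {x y : X} (hx : ‖x‖ = 1) (hy : ‖y‖ = 1) {ε : ℝ} (h : BOrth ε x y) (t : ℝ) :
    1 - ε * |t| ≤ ‖x + t • y‖ := by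
  by_contra! hlt
  obtain ⟨c, hc⟩ : ∃ c, c = 1 - ‖x + t • y‖ := ⟨_, rfl⟩
  obtain ⟨d, hd⟩ : ∃ d, d = c - ε * |t| := ⟨_, rfl⟩
  have hd0 : 0 < d := by linarith
  -- For `0 < s < 1`, convexity and the hypothesis at `s * t` give `2 * d ≤ s * c ^ 2`;
  -- this `s` is small enough to contradict that.
  obtain ⟨s, hs⟩ : ∃ s, s = d / (c ^ 2 + d + 1) := ⟨_, rfl⟩
  have hD : 0 < c ^ 2 + d + 1 := by positivity
  have hs0 : 0 < s := by rw [hs]; positivity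
  have hs1 : s < 1 := by rw [hs, div_lt_one hD]; nlinarith [sq_nonneg c]
  have hsD : s * (c ^ 2 + d + 1) = d := by rw [hs]; field_simp
  have hconv : ‖x + (s * t) • y‖ ≤ 1 - s * c := by
    have e : x + (s * t) • y = (1 - s) • x + s • (x + t • y) := by module
    calc ‖x + (s * t) • y‖ ≤ ‖(1 - s) • x‖ + ‖s • (x + t • y)‖ := by
          rw [e]; exact norm_add_le _ _
      _ = 1 - s * c := by
          rw [norm_smul, norm_smul, hx, Real.norm_of_nonneg (by linarith),
            Real.norm_of_nonneg hs0.le, hc]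
          ring
  have hq := h (s * t)
  rw [norm_smul, hx, hy, Real.norm_eq_abs, abs_mul, abs_of_pos hs0] at hq
  have hsq : ‖x + (s * t) • y‖ ^ 2 ≤ (1 - s * c) ^ 2 :=
    pow_le_pow_left₀ (norm_nonneg _) hconv 2
  have hmul : s * (2 * d) ≤ s * (s * c ^ 2) := by rw [hd]; linarith
  have hle : 2 * d ≤ s * c ^ 2 := le_of_mul_le_mul_left hmul hs0
  nlinarith [mul_pos hs0 hd0]

theorem stmt_10 {X : Type*} [NormedAddCommGroup X] [NormedSpace ℝ X]
    (x y : X) (hx : ‖x‖ = 1) (hy : ‖y‖ = 1)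
    (ε : ℝ) (hε : ε ∈ Set.Ico (0 : ℝ) 1) (h : BOrth ε x y) :
    ∃ δ ∈ Set.Ioo (0 : ℝ) (1 - ε),
      ∀ z : X, ‖z‖ = 1 → ‖z - y‖ < δ → BOrth (ε + δ) x z := by
  obtain ⟨hε0, hε1⟩ := hε
  refine ⟨(1 - ε) / 2, ⟨by linarith, by linarith⟩, fun z hz hzy t => ?_⟩
  obtain ⟨δ, hδ⟩ : ∃ δ, δ = (1 - ε) / 2 := ⟨_, rfl⟩
  rw [← hδ] at hzy ⊢
  have hlin : 1 - (ε + δ) * |t| ≤ ‖x + t • z‖ := by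
    have h1 := h.linear_bound hx hy t
    have h2 : ‖x + t • y‖ ≤ ‖x + t • z‖ + ‖t • (z - y)‖ := by
      have e : x + t • y = (x + t • z) - t • (z - y) := by module
      rw [e]; exact norm_sub_le _ _
    rw [norm_smul, Real.norm_eq_abs] at h2
    nlinarith [mul_le_mul_of_nonneg_left hzy.le (abs_nonneg t)]
  rw [norm_smul, hx, hz, Real.norm_eq_abs]
  -- If the linear bound is negative, it cannot be squared, but then the quadratic one is too.
  rcases le_total 0 (1 - (ε + δ) * |t|) with hp | hn
  · have := pow_le_pow_left₀ hp hlin 2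
    nlinarith [sq_nonneg ((ε + δ) * |t|)]
  · nlinarith [sq_nonneg ‖x + t • z‖]
end

section
/- Let X = ℝ² equipped with the supremum norm, let ε ∈ [0,1), and set x = (1,1) and y = (−1,−ε). Then x ⊥_B^ε y, but for every δ ∈ (0, 1 − ε) there exists a unit vector z with ‖z − x‖ < δ such that z ⊥_B^{ε+δ} y fails. (Thus C-approximate Birkhoff-James orthogonality is not stable under small perturbations of the first vector.) -/
/-!
Since `‖y‖ = 1`, the second coordinate `1 - ε t` of `x + t y` alone gives
`‖x + t y‖² ≥ (1 - ε t)² ≥ 1 - 2 ε |t|`, which is `x ⊥_B^ε y`.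

For the instability, take `z = (1, 1 - δ/2)`. At `z` only the first coordinate attains the norm,
so for small `t > 0` one has `‖z + t y‖ = 1 - t`, and
`(1 - t)² = 1 - 2 t + t² < 1 - 2 (ε + δ) t` as soon as `t < 2 (1 - ε - δ)`.
-/

open Set Metric

lemma norm_smul_direction (ε : ℝ) (hε : ε ∈ Set.Ico (0 : ℝ) 1) (t : ℝ) :
    ‖t • (![-1, -ε] : Fin 2 → ℝ)‖ = |t| := by
  have h : ‖(![-1, -ε] : Fin 2 → ℝ)‖ = 1 := by
    apply le_antisymm
    · rw [pi_norm_le_iff_of_nonneg zero_le_one, Fin.forall_fin_two]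
      simp [abs_le]
      constructor <;> linarith [hε.1, hε.2]
    · simpa using norm_le_pi_norm (![-1, -ε] : Fin 2 → ℝ) 0
  rw [norm_smul, h, mul_one, Real.norm_eq_abs]

theorem stmt_11 (ε : ℝ) (hε : ε ∈ Set.Ico (0 : ℝ) 1)
    (x y : Fin 2 → ℝ) (hx : x = ![1, 1]) (hy : y = ![-1, -ε]) :
    BOrth ε x y ∧
    ∀ δ ∈ Set.Ioo (0 : ℝ) (1 - ε),
      ∃ z : Fin 2 → ℝ, ‖z‖ = 1 ∧ ‖z - x‖ < δ ∧ ¬ BOrth (ε + δ) z y := by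
  subst hx hy
  have h0 := hε.1
  have h1 := hε.2
  constructor
  · intro t
    have hx : ‖(![1, 1] : Fin 2 → ℝ)‖ = 1 := by
      apply le_antisymm
      · rw [pi_norm_le_iff_of_nonneg zero_le_one, Fin.forall_fin_two]
        simp
      · simpa using norm_le_pi_norm (![1, 1] : Fin 2 → ℝ) 0
    rw [norm_smul_direction ε hε, hx]
    have h2 : |1 - ε * t| ≤ ‖(![1, 1] : Fin 2 → ℝ) + t • ![-1, -ε]‖ := by
      have := norm_le_pi_norm ((![1, 1] : Fin 2 → ℝ) + t • ![-1, -ε]) 1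
      have e : ((![1, 1] : Fin 2 → ℝ) + t • ![-1, -ε]) 1 = 1 - ε * t := by
        simp
        ring
      rwa [e, Real.norm_eq_abs] at this
    have h3 := pow_le_pow_left₀ (abs_nonneg _) h2 2
    rw [sq_abs] at h3
    nlinarith [mul_le_mul_of_nonneg_left (le_abs_self t) h0, sq_nonneg (ε * t)]
  · rintro δ ⟨hδ0, hδ1⟩
    have hz : ‖(![1, 1 - δ / 2] : Fin 2 → ℝ)‖ = 1 := by
      apply le_antisymm
      · rw [pi_norm_le_iff_of_nonneg zero_le_one, Fin.forall_fin_two]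
        simp [abs_le]
        constructor <;> linarith
      · simpa using norm_le_pi_norm (![1, 1 - δ / 2] : Fin 2 → ℝ) 0
    refine ⟨![1, 1 - δ / 2], hz, ?_, fun h => ?_⟩
    · rw [pi_norm_lt_iff hδ0, Fin.forall_fin_two]
      simp [abs_of_pos hδ0]
      linarith
    · -- `t ≤ δ / 2` keeps the first coordinate dominant; `t ≤ 1 - ε - δ` breaks the inequality.
      obtain ⟨t, ht0, ht1, ht2⟩ : ∃ t : ℝ, 0 < t ∧ t ≤ δ / 2 ∧ t ≤ 1 - ε - δ :=
        ⟨min (δ / 2) (1 - ε - δ), lt_min (by linarith) (by linarith),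
          min_le_left _ _, min_le_right _ _⟩
      have h2 := h t
      rw [norm_smul_direction ε hε, hz, abs_of_pos ht0] at h2
      have h3 : ‖(![1, 1 - δ / 2] : Fin 2 → ℝ) + t • ![-1, -ε]‖ ≤ 1 - t := by
        have hεt : 0 ≤ t * ε := mul_nonneg ht0.le h0
        have hεt' : t * ε ≤ t := by nlinarith
        rw [pi_norm_le_iff_of_nonneg (by linarith), Fin.forall_fin_two]
        simp [abs_le]
        refine ⟨?_, ?_, ?_⟩ <;> linarith
      have h4 := pow_le_pow_left₀ (norm_nonneg _) h3 2
      nlinarith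
end

section
/- Let X be a real normed linear space and let 𝒜 ⊆ S_X be a compact subset. Then every y ∈ 𝒜 is C-approximately right-symmetric on 𝒜 (i.e., for each y ∈ 𝒜 there exists ε_y ∈ [0,1) such that for all z ∈ 𝒜, z ⊥_B y implies y ⊥_B^{ε_y} z) if and only if every x ∈ 𝒜 has the local property (P) on 𝒜 (i.e., there is no y ∈ 𝒜 with x ⊥_B y such that every f ∈ J(y) satisfies f ∈ J(x) or −f ∈ J(x)). -/
/-!
For unit vectors, `y ⊥_B^ε z` is governed by supporting functionals. If some `f ∈ J(y)` has
`|f z| ≤ ε`, then `‖y + t z‖² ≥ (1 + t f z)² ≥ 1 - 2ε|t|` (`bOrth_of_supp`). Conversely,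
`y ⊥_B^ε z` yields some `f ∈ J(y)` with `f z ≤ ε`, a weak-* limit of norming functionals of
`y - t z` as `t ↓ 0` (`exists_supp_le`), and, by the symmetry `z ↦ -z`, another with `f z ≥ -ε`.

Failure of property (P) on `𝒜` provides `x ⊥_B y` with `|f x| = 1` for all `f ∈ J(y)`. If also
`y ⊥_B^ε x` with `ε < 1`, the two functionals above take the values `-1` and `1` at `x`, so their
midpoint, which is again in `J(y)`, vanishes at `x`: a contradiction.

Conversely, under property (P) each `z ∈ 𝒜` with `z ⊥_B y` has some `f ∈ J(y)` with `|f z| < 1`.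
This bound persists near `z`, and the set of such `z` is compact, so a single `ε < 1` suffices.
-/


open Set Metric

section Helpers

variable {E : Type*} [NormedAddCommGroup E] [NormedSpace ℝ E]

lemma mem_suppJ_of_le {y : E} (hy : ‖y‖ = 1) {f : E →L[ℝ] ℝ} (hf : ‖f‖ ≤ 1) (h : 1 ≤ f y) :
    f ∈ SuppJ y := by
  have h1 : f y ≤ ‖f‖ := by
    have := (le_abs_self _).trans (f.le_opNorm y)
    rwa [hy, mul_one] at this
  exact ⟨by linarith, by linarith⟩

lemma abs_apply_le_one {y z : E} (hz : ‖z‖ = 1) {f : E →L[ℝ] ℝ} (hf : f ∈ SuppJ y) :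
    |f z| ≤ 1 := by
  have := f.le_opNorm z
  rwa [hz, hf.1, mul_one] at this

lemma bOrth_of_supp {ε : ℝ} {y z : E} (hy : ‖y‖ = 1) (hz : ‖z‖ = 1) {f : E →L[ℝ] ℝ}
    (hf : f ∈ SuppJ y) (hfz : |f z| ≤ ε) : BOrth ε y z := by
  intro t
  have h1 : |1 + t * f z| ≤ ‖y + t • z‖ := by
    have := f.le_opNorm (y + t • z)
    simpa [hf.1, hf.2, hy] using this
  have h2 : (1 + t * f z) ^ 2 ≤ ‖y + t • z‖ ^ 2 := by
    rw [← sq_abs]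
    gcongr
  have h3 : -(|t| * ε) ≤ t * f z := by
    have h4 : |t * f z| ≤ |t| * ε := by
      rw [abs_mul]
      gcongr
    linarith [neg_abs_le (t * f z)]
  rw [norm_smul, hy, hz, Real.norm_eq_abs]
  nlinarith [sq_nonneg (t * f z)]

/-- A norming functional of `y - t • x` nearly supports `y`, and its value at `x` exceeds `ε`
by at most `t`. -/
lemma exists_near_supp {ε : ℝ} {x y : E} (hx : ‖x‖ = 1) (hy : ‖y‖ = 1)
    (h : BOrth ε y x) {t : ℝ} (ht : 0 < t) :
    ∃ f : E →L[ℝ] ℝ, ‖f‖ ≤ 1 ∧ 1 - 2 * t ≤ f y ∧ f x ≤ ε + t := by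
  obtain ⟨f, hf, hfv⟩ := exists_dual_vector'' ℝ (y + (-t) • x)
  have bound : ∀ v : E, ‖v‖ = 1 → |f v| ≤ 1 := fun v hv => by
    have := f.le_of_opNorm_le hf v
    rwa [hv, mul_one] at this
  have bx := abs_le.1 (bound x hx)
  have byy := abs_le.1 (bound y hy)
  have hval : f y - t * f x = ‖y + (-t) • x‖ := by
    simpa [sub_eq_add_neg] using hfv
  have hlow : 1 - t ≤ ‖y + (-t) • x‖ := by
    have := norm_sub_norm_le y (t • x)
    rw [norm_smul, hy, hx, Real.norm_of_nonneg ht.le] at this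
    simpa [sub_eq_add_neg] using this
  have hsq := h (-t)
  rw [norm_smul, hy, hx, norm_neg, Real.norm_of_nonneg ht.le] at hsq
  refine ⟨f, hf, by nlinarith, ?_⟩
  have hs : ‖y + (-t) • x‖ ^ 2 ≤ (1 - t * f x) ^ 2 := by
    gcongr
    linarith
  -- Expanding the squares gives `2 t f(x) ≤ 2 ε t + t² f(x)²`; then divide by `2 t`.
  have hfx : (f x) ^ 2 ≤ 1 := by nlinarith
  have hk : t * (f x) ≤ t * (ε + t) := by nlinarith [mul_le_mul_of_nonneg_left hfx (sq_nonneg t)]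
  exact le_of_mul_le_mul_left hk ht

/-- The weak-* limit of the functionals from `exists_near_supp` supports `y`. -/
lemma exists_supp_le {ε : ℝ} {x y : E} (hx : ‖x‖ = 1) (hy : ‖y‖ = 1)
    (h : BOrth ε y x) : ∃ f ∈ SuppJ y, f x ≤ ε := by
  have hex : ∀ n : ℕ, ∃ f : E →L[ℝ] ℝ,
      ‖f‖ ≤ 1 ∧ 1 - 2 * (1 / ((n : ℝ) + 1)) ≤ f y ∧ f x ≤ ε + 1 / ((n : ℝ) + 1) := fun n =>
    exists_near_supp hx hy h (by positivity)
  choose f hf1 hfy hfx using hex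
  -- Banach–Alaoglu, applied along a free ultrafilter on `ℕ`.
  have hK := WeakDual.isCompact_closedBall (𝕜 := ℝ) (E := E) 0 1
  obtain ⟨g, hgK, hg⟩ := hK.ultrafilter_le_nhds
    ((Filter.hyperfilter ℕ).map fun n => StrongDual.toWeakDual (f n)) (by
      rw [Filter.le_principal_iff]
      refine Filter.mem_map.2 (Filter.univ_mem' fun n => ?_)
      simpa using hf1 n)
  have hlim : ∀ v : E, Filter.Tendsto (fun n => f n v) (Filter.hyperfilter ℕ : Filter ℕ)
      (nhds (g v)) := fun v =>
    ((WeakDual.eval_continuous v).tendsto g).comp hg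
  have h0 : Filter.Tendsto (fun n : ℕ => 1 / ((n : ℝ) + 1)) (Filter.hyperfilter ℕ : Filter ℕ)
      (nhds 0) :=
    tendsto_one_div_add_atTop_nhds_zero_nat.mono_left Nat.hyperfilter_le_atTop
  refine ⟨WeakDual.toStrongDual g, mem_suppJ_of_le hy (by simpa using hgK) ?_, ?_⟩
  · have := le_of_tendsto_of_tendsto' ((h0.const_mul 2).const_sub 1) (hlim y) hfy
    simpa using this
  · have := le_of_tendsto_of_tendsto' (hlim x) (h0.const_add ε) hfx
    simpa using this

lemma BOrth.neg_right {ε : ℝ} {x y : E} (h : BOrth ε y x) : BOrth ε y (-x) := fun t => by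
  simpa using h (-t)

lemma isClosed_bjOrth (y : E) : IsClosed {z : E | BJOrth z y} := by
  simp only [BJOrth, Set.ofPred_forall]
  exact isClosed_iInter fun t => isClosed_le (by fun_prop) (by fun_prop)

end Helpers

theorem stmt_12 {X : Type*} [NormedAddCommGroup X] [NormedSpace ℝ X]
    (𝒜 : Set X) (h𝒜S : 𝒜 ⊆ Metric.sphere (0 : X) 1) (h𝒜c : IsCompact 𝒜) :
    (∀ y ∈ 𝒜, ∃ ε ∈ Set.Ico (0 : ℝ) 1, ∀ z ∈ 𝒜, BJOrth z y → BOrth ε y z) ↔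
    (∀ x ∈ 𝒜, ¬ ∃ y ∈ 𝒜, BJOrth x y ∧ ∀ f ∈ SuppJ y, f ∈ SuppJ x ∨ -f ∈ SuppJ x) := by
  have hn : ∀ z ∈ 𝒜, ‖z‖ = 1 := fun z hz => by simpa using h𝒜S hz
  constructor
  · rintro H x hx ⟨y, hy, hxy, hJ⟩
    obtain ⟨ε, ⟨hε0, hε1⟩, hε⟩ := H y hy
    have hb := hε x hx hxy
    have hv : ∀ f ∈ SuppJ y, f x = 1 ∨ f x = -1 := fun f hf => by
      rcases hJ f hf with h | h
      · exact Or.inl (h.2.trans (hn x hx))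
      · right
        have := h.2
        rw [hn x hx, neg_apply] at this
        linarith
    obtain ⟨f, hf, hfx⟩ := exists_supp_le (hn x hx) (hn y hy) hb
    obtain ⟨g, hg, hgx⟩ := exists_supp_le ((norm_neg x).trans (hn x hx)) (hn y hy) hb.neg_right
    rw [map_neg] at hgx
    have hf1 : f x = -1 := (hv f hf).resolve_left (by linarith)
    have hg1 : g x = 1 := (hv g hg).resolve_right (by linarith)
    have hm : (1 / 2 : ℝ) • (f + g) ∈ SuppJ y := by
      refine mem_suppJ_of_le (hn y hy) ?_ ?_
      · rw [norm_smul, Real.norm_of_nonneg (by norm_num)]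
        linarith [norm_add_le f g, hf.1, hg.1]
      · have h1 := hf.2
        have h2 := hg.2
        rw [hn y hy] at h1 h2
        simp only [smul_apply, add_apply, smul_eq_mul]
        linarith
    have := hv _ hm
    simp only [smul_apply, add_apply, hf1, hg1] at this
    norm_num at this
  · intro H y hy
    have hZ : IsCompact (𝒜 ∩ {z | BJOrth z y}) := h𝒜c.inter_right (isClosed_bjOrth y)
    have key : ∃ ε ∈ Set.Ico (0 : ℝ) 1, ∀ z ∈ 𝒜 ∩ {z | BJOrth z y},
        ∃ f ∈ SuppJ y, |f z| ≤ ε := by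
      refine hZ.induction_on (p := fun s => ∃ ε ∈ Set.Ico (0 : ℝ) 1, ∀ z ∈ s,
        ∃ f ∈ SuppJ y, |f z| ≤ ε) ⟨0, by simp, by simp⟩ ?_ ?_ ?_
      · rintro s t hst ⟨ε, hε, h⟩
        exact ⟨ε, hε, fun z hz => h z (hst hz)⟩
      · rintro s t ⟨ε, hε, h⟩ ⟨δ, hδ, h'⟩
        refine ⟨max ε δ, ⟨le_max_of_le_left hε.1, max_lt hε.2 hδ.2⟩, ?_⟩
        rintro z (hz | hz)
        · obtain ⟨f, hf, hfz⟩ := h z hz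
          exact ⟨f, hf, hfz.trans (le_max_left _ _)⟩
        · obtain ⟨f, hf, hfz⟩ := h' z hz
          exact ⟨f, hf, hfz.trans (le_max_right _ _)⟩
      · rintro z ⟨hz, hzy⟩
        have hP := H z hz
        push Not at hP
        obtain ⟨f, hf, hf1, hf2⟩ := hP y hy hzy
        have hlt : |f z| < 1 := by
          refine lt_of_le_of_ne (abs_apply_le_one (hn z hz) hf) fun heq => ?_
          rcases eq_or_eq_neg_of_abs_eq heq with h | h
          · exact hf1 ⟨hf.1, h.trans (hn z hz).symm⟩
          · refine hf2 ⟨(norm_neg f).trans hf.1, ?_⟩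
            rw [neg_apply, h, hn z hz, neg_neg]
        obtain ⟨r, hr, hr1⟩ := exists_between hlt
        refine ⟨{w | |f w| < r}, mem_nhdsWithin_of_mem_nhds ?_, r,
          ⟨(abs_nonneg _).trans hr.le, hr1⟩, fun w hw => ⟨f, hf, le_of_lt hw⟩⟩
        exact (isOpen_lt (by fun_prop) continuous_const).mem_nhds hr
    obtain ⟨ε, hε, h⟩ := key
    refine ⟨ε, hε, fun z hz hzy => ?_⟩
    obtain ⟨f, hf, hfz⟩ := h z ⟨hz, hzy⟩
    exact bOrth_of_supp (hn y hy) (hn z hz) hf hfz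
end

section
/- Let X be a finite-dimensional polyhedral real Banach space such that R(X) ≤ 1, where R(X) = sup{‖x − y‖ : the segment [x,y] is contained in S_X}. Then the Birkhoff-James orthogonality is C-approximately symmetric in X: there exists ε ∈ [0,1) such that for all x, y ∈ X, x ⊥_B y implies y ⊥_B^ε x. -/
/-!
The argument runs in the dual. Since the unit ball has finitely many extreme points, so does the dual
ball: an extreme functional `f` is determined by the set of vertices at which it equals `1`, because a
functional vanishing on those vertices could be used to perturb `f` in both directions. Hence the
norm is the maximum of finitely many functionals (`exists_finite_norming`), and each unit vector `x`
has a finite set `A` of active functionals, those with value `1` at `x`.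

If `x₀ ⊥_B y₀` are unit vectors with active sets `A` and `B`, then no unit vector `x` on which all of
`A` is active can also have all of `B` active (`exists_active_lt_one`): otherwise `‖x - y₀‖ ≥ 1`,
because some `f ∈ A` has `f y₀ ≤ 0`, and the segment from `x` to `y₀` can be prolonged slightly beyond
`y₀` inside the sphere, giving a segment of length greater than `1` in the sphere. By compactness the
minimum over `B` of `f x` is bounded by some `ε < 1`, uniformly in all such `x`, and finitely many
pairs `(A, B)` occur. Applying the resulting bound to `x` and `-x` yields active functionals `f₁, f₂`
of `y` with `f₁ x ≤ ε ‖x‖` and `f₂ x ≥ -ε ‖x‖`, which give the lower estimate of `‖y + t • x‖`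
for `t ≤ 0` and `t ≥ 0` respectively.
-/

open Set Metric

section Proof

variable {X : Type*} [NormedAddCommGroup X] [NormedSpace ℝ X]

/-- Finitely many strict inequalities survive a small step in given directions. -/
lemma exists_pos_small {ι : Type*} [Finite ι] (a b : ι → ℝ) :
    ∃ s : ℝ, 0 < s ∧ ∀ i, a i < 1 → a i + s * b i < 1 := by
  have h : ∀ i, ∀ᶠ s : ℝ in nhdsWithin 0 (Ioi 0), a i < 1 → a i + s * b i < 1 := by
    intro i
    by_cases hi : a i < 1
    · have hc : Filter.Tendsto (fun s : ℝ => a i + s * b i) (nhdsWithin 0 (Ioi 0))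
          (nhds (a i + 0 * b i)) :=
        ((by fun_prop : Continuous fun s : ℝ => a i + s * b i).tendsto 0).mono_left
          nhdsWithin_le_nhds
      have := hc.eventually (gt_mem_nhds (by simpa using hi : a i + 0 * b i < 1))
      filter_upwards [this] with s hs _ using hs
    · exact Filter.Eventually.of_forall fun s hs => absurd hs hi
  have h' := (Filter.eventually_all.2 h).and self_mem_nhdsWithin
  obtain ⟨s, hs, hs0⟩ := h'.exists
  exact ⟨s, hs0, hs⟩

/-- The sphere cannot contain a segment longer than `1`, so a unit vector `x` sharing the active
functionals of `x₀` cannot also share all those of `y₀` when `x₀ ⊥_B y₀`. -/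
lemma exists_active_lt_one {ι : Type*} [Finite ι] (F : ι → X →L[ℝ] ℝ)
    (hle : ∀ i x, F i x ≤ ‖x‖) (hmax : ∀ x, ∃ i, F i x = ‖x‖)
    (hR : ∀ x y : X, segment ℝ x y ⊆ Metric.sphere (0 : X) 1 → ‖x - y‖ ≤ 1)
    {x₀ y₀ x : X} (hx₀ : ‖x₀‖ = 1) (hy₀ : ‖y₀‖ = 1) (hx : ‖x‖ = 1) (horth : BJOrth x₀ y₀)
    (hA : ∀ i, F i x₀ = 1 → F i x = 1) : ∃ i, F i y₀ = 1 ∧ F i x < 1 := by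
  by_contra! hB
  replace hB : ∀ i, F i y₀ = 1 → F i x = 1 := fun i hi =>
    le_antisymm (hx ▸ hle i x) (hB i hi)
  have hdist : 1 ≤ ‖x - y₀‖ := by
    have : ∃ i, F i x₀ = 1 ∧ F i y₀ ≤ 0 := by
      by_contra! hpos
      obtain ⟨s, hs, H⟩ := exists_pos_small (fun i => F i x₀) (fun i => -F i y₀)
      obtain ⟨i, hi⟩ := hmax (x₀ + (-s) • y₀)
      have h1 := horth (-s)
      rw [← hi, hx₀] at h1
      simp only [map_add, map_smul, smul_eq_mul] at h1
      rcases (hx₀ ▸ hle i x₀ : F i x₀ ≤ 1).lt_or_eq with h | h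
      · have := H i h
        linarith
      · have := mul_pos hs (hpos i h)
        linarith
    obtain ⟨i, hi, hiy⟩ := this
    have h1 := hle i (x - y₀)
    rw [map_sub, hA i hi] at h1
    linarith
  obtain ⟨s, hs, H⟩ := exists_pos_small (fun i => F i y₀) (fun i => F i y₀ - F i x)
  set z := y₀ + s • (y₀ - x) with hz
  have hz1 : ‖z‖ ≤ 1 := by
    obtain ⟨i, hi⟩ := hmax z
    rw [← hi, hz]
    simp only [map_add, map_smul, map_sub, smul_eq_mul]
    rcases (hy₀ ▸ hle i y₀ : F i y₀ ≤ 1).lt_or_eq with h | h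
    · exact (H i h).le
    · rw [h, hB i h]; simp
  have hseg : segment ℝ x z ⊆ Metric.sphere (0 : X) 1 := by
    intro w hw
    rw [mem_sphere_zero_iff_norm]
    apply le_antisymm
    · have := (convex_closedBall (0 : X) 1).segment_subset (by simp [hx] : x ∈ _)
        (by simpa using hz1 : z ∈ _) hw
      simpa using this
    · obtain ⟨i, hi⟩ := hmax y₀
      rw [hy₀] at hi
      obtain ⟨a, b, -, -, hab, rfl⟩ := hw
      refine le_trans (le_of_eq ?_) (hle i _)
      simp [hz, hi, hB i hi, hab]
  have h1 := hR x z hseg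
  have h2 : x - z = (1 + s) • (x - y₀) := by rw [hz]; module
  rw [h2, norm_smul, Real.norm_of_nonneg (by linarith)] at h1
  nlinarith

variable [FiniteDimensional ℝ X]

/-- A functional bounded by `1` at the vertices of the unit ball has norm at most `1`. -/
lemma norm_le_one_of_extremePoints (k : X →L[ℝ] ℝ)
    (hk : ∀ e ∈ Set.extremePoints ℝ (Metric.closedBall (0 : X) 1), k e ≤ 1) : ‖k‖ ≤ 1 := by
  have hball : ∀ x ∈ Metric.closedBall (0 : X) 1, k x ≤ 1 := by
    have hKM := closure_convexHull_extremePoints (isCompact_closedBall (0 : X) 1)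
      (convex_closedBall (0 : X) 1)
    intro x hx
    rw [← hKM] at hx
    have hcl : IsClosed {x : X | k x ≤ 1} := isClosed_le k.continuous continuous_const
    have hcv : Convex ℝ {x : X | k x ≤ 1} := convex_halfSpace_le k.toLinearMap.isLinear 1
    exact closure_minimal (convexHull_min hk hcv) hcl hx
  refine ContinuousLinearMap.opNorm_le_of_unit_norm zero_le_one fun x hx => ?_
  rw [Real.norm_eq_abs, abs_le]
  have h1 := hball x (by simp [hx])
  have h2 := hball (-x) (by simp [hx])
  rw [map_neg] at h2
  constructor <;> linarith

/-- An extreme functional of the dual ball is determined by the vertices at which it equals `1`. -/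
lemma extreme_eq_of_active
    (hpoly : (Set.extremePoints ℝ (Metric.closedBall (0 : X) 1)).Finite)
    {f g : X →L[ℝ] ℝ}
    (hf : f ∈ Set.extremePoints ℝ (Metric.closedBall (0 : X →L[ℝ] ℝ) 1))
    (hfg : ∀ e ∈ Set.extremePoints ℝ (Metric.closedBall (0 : X) 1), f e = 1 → g e = 1) :
    f = g := by
  have := hpoly.to_subtype
  set E := Set.extremePoints ℝ (Metric.closedBall (0 : X) 1) with hE
  obtain ⟨s, hs, H⟩ := exists_pos_small (ι := E × Bool) (fun p => f p.1)
    (fun p => if p.2 then f p.1 - g p.1 else -(f p.1 - g p.1))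
  have hfn : ‖f‖ ≤ 1 := by simpa using hf.1
  have hle : ∀ e ∈ E, f e ≤ 1 := fun e he => by
    have h1 : ‖e‖ ≤ 1 := by simpa using he.1
    have h2 := f.le_of_opNorm_le_of_le hfn h1
    rw [Real.norm_eq_abs] at h2
    linarith [le_abs_self (f e)]
  have hp : f + s • (f - g) ∈ Metric.closedBall (0 : X →L[ℝ] ℝ) 1 := by
    rw [mem_closedBall_zero_iff]
    refine norm_le_one_of_extremePoints _ fun e he => ?_
    rcases (hle e he).lt_or_eq with h | h
    · have := H (⟨e, he⟩, true) h
      simp at this ⊢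
      linarith
    · simp [h, hfg e he h]
  have hm : f - s • (f - g) ∈ Metric.closedBall (0 : X →L[ℝ] ℝ) 1 := by
    rw [mem_closedBall_zero_iff]
    refine norm_le_one_of_extremePoints _ fun e he => ?_
    rcases (hle e he).lt_or_eq with h | h
    · have := H (⟨e, he⟩, false) h
      simp at this ⊢
      linarith
    · simp [h, hfg e he h]
  have hseg : f ∈ openSegment ℝ (f + s • (f - g)) (f - s • (f - g)) :=
    ⟨1 / 2, 1 / 2, by norm_num, by norm_num, by norm_num, by module⟩
  have h1 := hf.2 hp hm hseg
  have h2 : s • (f - g) = 0 := by simpa using h1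
  exact sub_eq_zero.1 ((smul_eq_zero.1 h2).resolve_left hs.ne')

/-- A polyhedral norm is the maximum of finitely many linear functionals, namely the extreme points
of the dual ball. -/
lemma exists_finite_norming
    (hpoly : (Set.extremePoints ℝ (Metric.closedBall (0 : X) 1)).Finite) :
    ∃ D : Set (X →L[ℝ] ℝ), D.Finite ∧ (∀ f ∈ D, ∀ x, f x ≤ ‖x‖) ∧
      ∀ x, ∃ f ∈ D, f x = ‖x‖ := by
  have hbd : ∀ f ∈ Metric.closedBall (0 : X →L[ℝ] ℝ) 1, ∀ x, f x ≤ ‖x‖ := fun f hf x => by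
    have h2 := f.le_of_opNorm_le (by simpa using hf : ‖f‖ ≤ 1) x
    rw [Real.norm_eq_abs] at h2
    linarith [le_abs_self (f x)]
  refine ⟨Set.extremePoints ℝ (Metric.closedBall (0 : X →L[ℝ] ℝ) 1), ?_,
    fun f hf => hbd f hf.1, fun x => ?_⟩
  · refine Set.Finite.of_finite_image (f := fun f : X →L[ℝ] ℝ =>
      {e | e ∈ Set.extremePoints ℝ (Metric.closedBall (0 : X) 1) ∧ f e = 1})
      (hpoly.finite_subsets.subset ?_) ?_
    · rintro _ ⟨f, -, rfl⟩ e he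
      exact he.1
    · intro f hf g _ hfg
      refine extreme_eq_of_active hpoly hf fun e he hfe => ?_
      exact ((Set.ext_iff.1 hfg e).1 ⟨he, hfe⟩).2
  · -- The functionals in the dual ball attaining `‖x‖` form a compact face; any extreme point of
    -- that face is an extreme point of the ball.
    set S : Set (X →L[ℝ] ℝ) := {f | f ∈ Metric.closedBall (0 : X →L[ℝ] ℝ) 1 ∧ f x = ‖x‖} with hS
    have hcl : IsClosed {f : X →L[ℝ] ℝ | f x = ‖x‖} :=
      isClosed_eq (by fun_prop) continuous_const
    have hSc : IsCompact S := (isCompact_closedBall (0 : X →L[ℝ] ℝ) 1).inter_right hcl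
    have hSn : S.Nonempty := by
      obtain ⟨g, hg, hgx⟩ := exists_dual_vector'' ℝ x
      exact ⟨g, by simpa using hg, by simpa using hgx⟩
    obtain ⟨f, hf⟩ := hSc.extremePoints_nonempty hSn
    have hext : IsExtreme ℝ (Metric.closedBall (0 : X →L[ℝ] ℝ) 1) S := by
      refine ⟨fun f hf => hf.1, ?_⟩
      rintro f₁ hf₁ f₂ hf₂ h ⟨-, hx⟩ ⟨a, b, ha, hb, hab, rfl⟩
      refine ⟨hf₁, le_antisymm (hbd f₁ hf₁ x) ?_⟩
      have h2 := hbd f₂ hf₂ x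
      have hx' : a * f₁ x + b * f₂ x = ‖x‖ := by simpa using hx
      have hb' : b = 1 - a := by linarith
      subst hb'
      nlinarith
    exact ⟨f, hext.extremePoints_subset_extremePoints hf, hf.1.2⟩

/-- A bound `ε < 1` that is uniform over all orthogonal pairs of unit vectors. -/
lemma exists_uniform_bound {ι : Type*} [Fintype ι] (F : ι → X →L[ℝ] ℝ)
    (hle : ∀ i x, F i x ≤ ‖x‖) (hmax : ∀ x, ∃ i, F i x = ‖x‖)
    (hR : ∀ x y : X, segment ℝ x y ⊆ Metric.sphere (0 : X) 1 → ‖x - y‖ ≤ 1) :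
    ∃ ε < (1 : ℝ), ∀ x y : X, ‖x‖ = 1 → ‖y‖ = 1 → BJOrth x y →
      ∃ i, F i y = 1 ∧ F i x ≤ ε := by
  have key : ∀ p : Set ι × Set ι, ∃ ε < (1 : ℝ), ∀ x y : X, ‖x‖ = 1 → ‖y‖ = 1 → BJOrth x y →
      {i | F i x = 1} = p.1 → {i | F i y = 1} = p.2 → ∃ i, F i y = 1 ∧ F i x ≤ ε := by
    classical
    rintro ⟨A, B⟩
    by_cases hex : ∃ x y : X, ‖x‖ = 1 ∧ ‖y‖ = 1 ∧ BJOrth x y ∧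
      {i | F i x = 1} = A ∧ {i | F i y = 1} = B
    · obtain ⟨x₀, y₀, hx₀, hy₀, horth, rfl, rfl⟩ := hex
      set K : Set X := Metric.sphere 0 1 ∩ {x | ∀ i, F i x₀ = 1 → F i x = 1} with hK
      have hKc : IsCompact K := by
        refine (isCompact_sphere (0 : X) 1).inter_right ?_
        simp only [Set.ofPred_forall]
        exact isClosed_iInter fun i => isClosed_iInter fun _ =>
          isClosed_eq (F i).continuous continuous_const
      have hKn : K.Nonempty := ⟨x₀, by simp [hx₀], fun i hi => hi⟩
      have hBn : (Finset.univ.filter fun i => F i y₀ = 1).Nonempty := by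
        obtain ⟨i, hi⟩ := hmax y₀
        exact ⟨i, by simp [hi, hy₀]⟩
      obtain ⟨x₁, hx₁, hx₁max⟩ := hKc.exists_isMaxOn hKn
        (f := fun x => (Finset.univ.filter fun i => F i y₀ = 1).inf' hBn fun i => F i x)
        (Continuous.finset_inf'_apply hBn fun i _ => (F i).continuous).continuousOn
      refine ⟨(Finset.univ.filter fun i => F i y₀ = 1).inf' hBn fun i => F i x₁, ?_,
        fun x y hx hy hxy hA hB => ?_⟩
      · rw [Finset.inf'_lt_iff]
        obtain ⟨i, hi, hi'⟩ := exists_active_lt_one F hle hmax hR hx₀ hy₀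
          (by simpa using hx₁.1) horth hx₁.2
        exact ⟨i, by simp [hi], hi'⟩
      · have hxK : x ∈ K := ⟨by simp [hx], fun i hi => (Set.ext_iff.1 hA i).2 hi⟩
        have h1 := hx₁max hxK
        obtain ⟨i, hi, hi'⟩ := Finset.exists_mem_eq_inf' hBn fun i => F i x
        refine ⟨i, (Set.ext_iff.1 hB i).2 (by simpa using hi), ?_⟩
        rw [← hi']
        exact h1
    · exact ⟨0, one_pos, fun x y hx hy hxy hA hB => absurd ⟨x, y, hx, hy, hxy, hA, hB⟩ hex⟩
  choose e he H using key
  obtain ⟨p, hp⟩ := Finite.exists_max e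
  refine ⟨e p, he p, fun x y hx hy hxy => ?_⟩
  obtain ⟨i, hi, hi'⟩ := H ({i | F i x = 1}, {i | F i y = 1}) x y hx hy hxy rfl rfl
  exact ⟨i, hi, hi'.trans (hp _)⟩

end Proof

theorem stmt_17 {X : Type*} [NormedAddCommGroup X] [NormedSpace ℝ X]
    [FiniteDimensional ℝ X]
    (hpoly : (Set.extremePoints ℝ (Metric.closedBall (0 : X) 1)).Finite)
    (hR : ∀ x y : X, segment ℝ x y ⊆ Metric.sphere (0 : X) 1 → ‖x - y‖ ≤ 1) :
    ∃ ε ∈ Set.Ico (0 : ℝ) 1, ∀ x y : X, BJOrth x y → BOrth ε y x := by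
  obtain ⟨D, hD, hle, hmax⟩ := exists_finite_norming hpoly
  have := hD.fintype
  obtain ⟨ε, hε, H⟩ := exists_uniform_bound (fun f : D => (f : X →L[ℝ] ℝ))
    (fun f x => hle f f.2 x)
    (fun x => by obtain ⟨f, hf, h⟩ := hmax x; exact ⟨⟨f, hf⟩, h⟩) hR
  have hneg : ∀ x y : X, BJOrth x y → BJOrth (-x) y := fun x y h t => by
    have e : -x + t • y = -(x + (-t) • y) := by module
    rw [e, norm_neg, norm_neg]
    exact h (-t)
  have hscale : ∀ x y : X, x ≠ 0 → y ≠ 0 → BJOrth x y →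
      ∃ f ∈ D, f y = ‖y‖ ∧ f x ≤ ε * ‖x‖ := by
    intro x y hx hy hxy
    have hx' := norm_pos_iff.2 hx
    have hy' := norm_pos_iff.2 hy
    obtain ⟨f, hf, hf'⟩ := H (‖x‖⁻¹ • x) (‖y‖⁻¹ • y)
      (by rw [norm_smul, norm_inv, norm_norm, inv_mul_cancel₀ hx'.ne'])
      (by rw [norm_smul, norm_inv, norm_norm, inv_mul_cancel₀ hy'.ne']) (fun t => by
        have h1 := hxy (‖x‖ * t * ‖y‖⁻¹)
        have h2 : ‖x‖⁻¹ • x + t • ‖y‖⁻¹ • y = ‖x‖⁻¹ • (x + (‖x‖ * t * ‖y‖⁻¹) • y) := by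
          rw [smul_add, smul_smul, smul_smul]
          congr 2
          field_simp
        rw [h2, norm_smul, norm_smul]
        gcongr)
    rw [map_smul, smul_eq_mul, inv_mul_eq_iff_eq_mul₀ hy'.ne'] at hf
    rw [map_smul, smul_eq_mul, inv_mul_le_iff₀ hx'] at hf'
    exact ⟨f, f.2, by simpa using hf, by linarith⟩
  refine ⟨max ε 0, ⟨le_max_right _ _, max_lt hε one_pos⟩, fun x y hxy t => ?_⟩
  by_cases hx : x = 0
  · simp [hx]
  by_cases hy : y = 0
  · simp [hy]
  have hlin : ‖y‖ - max ε 0 * ‖t • x‖ ≤ ‖y + t • x‖ := by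
    have hε' : ε * ‖x‖ ≤ max ε 0 * ‖x‖ := by gcongr; exact le_max_left _ _
    rw [norm_smul, Real.norm_eq_abs]
    rcases le_total 0 t with ht | ht
    · obtain ⟨f, hf, hfy, hfx⟩ := hscale (-x) y (neg_ne_zero.2 hx) hy (hneg x y hxy)
      have h1 := hle f hf (y + t • x)
      rw [map_add, map_smul, smul_eq_mul, hfy] at h1
      rw [map_neg, norm_neg] at hfx
      rw [abs_of_nonneg ht]
      nlinarith
    · obtain ⟨f, hf, hfy, hfx⟩ := hscale x y hx hy hxy
      have h1 := hle f hf (y + t • x)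
      rw [map_add, map_smul, smul_eq_mul, hfy] at h1
      rw [abs_of_nonpos ht]
      nlinarith
  nlinarith [sq_nonneg (‖y + t • x‖ - ‖y‖), mul_le_mul_of_nonneg_left hlin (norm_nonneg y)]
end

section
/- Let X be a finite-dimensional polyhedral real Banach space satisfying property (P1): whenever the segment [x,y] is contained in S_X and x ⊥_B y, both x and y are extreme points of the closed unit ball of X. Then every x ∈ S_X has the local property (P). -/
/-!
Let `x ⊥_B y` be unit vectors such that every `f ∈ J(y)` satisfies `f ∈ J(x)` or `-f ∈ J(x)`.
Any `f ∈ J(y)` has `f x = 1` or `f x = -1`, so `f` is constantly `1` on `[x, y]`, resp.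
`-f` is constantly `1` on `[x, -y]`, and that segment lies in the unit sphere. By (P1), `y` or
`-y`, hence `y`, is an extreme point of the unit ball.

In a polyhedral space an extreme point `y` of the ball is exposed (`exists_exposing`): the ball is
the convex hull of its finitely many extreme points, and `y` is strictly separated from the
(compact) hull of the others. An exposing functional `f ∈ J(y)` again takes one of the values `±1`
at `x`, which forces `x = y` or `x = -y`. This contradicts `x ⊥_B y`.
-/

open Set Metric

/-- A functional that is `1` at both endpoints certifies that a segment between unit vectors
lies in the unit sphere. -/
lemma segment_subset_sphere_of_functional {X : Type*} [NormedAddCommGroup X] [NormedSpace ℝ X]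
    {x y : X} (hx : ‖x‖ = 1) (hy : ‖y‖ = 1) {f : X →L[ℝ] ℝ} (hf : ‖f‖ = 1)
    (hfx : f x = 1) (hfy : f y = 1) : segment ℝ x y ⊆ Metric.sphere (0 : X) 1 := by
  intro z hz
  have hzB : z ∈ Metric.closedBall (0 : X) 1 :=
    (convex_closedBall (0 : X) 1).segment_subset (by simp [hx]) (by simp [hy]) hz
  obtain ⟨a, b, _, _, hab, rfl⟩ := hz
  have h1 : f (a • x + b • y) = 1 := by simp [hfx, hfy, hab]
  have h2 := f.le_opNorm (a • x + b • y)
  rw [h1, hf] at h2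
  simp only [mem_closedBall_zero_iff, mem_sphere_zero_iff_norm] at *
  norm_num at h2
  linarith

lemma neg_mem_extremePoints_closedBall {X : Type*} [NormedAddCommGroup X] [NormedSpace ℝ X]
    {y : X} (h : y ∈ Set.extremePoints ℝ (Metric.closedBall (0 : X) 1)) :
    -y ∈ Set.extremePoints ℝ (Metric.closedBall (0 : X) 1) := by
  refine ⟨by simpa using h.1, fun a ha b hb hab => ?_⟩
  have := h.2 (x₁ := -a) (by simpa using ha) (x₂ := -b) (by simpa using hb) (by
    obtain ⟨s, t, hs, ht, hst, e⟩ := hab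
    refine ⟨s, t, hs, ht, hst, ?_⟩
    rw [← neg_neg y, ← e]
    simp only [smul_neg]
    abel)
  rw [← this, neg_neg]

/-- Extreme points of a polyhedral unit ball are exposed. -/
lemma exists_exposing {X : Type*} [NormedAddCommGroup X] [NormedSpace ℝ X]
    [FiniteDimensional ℝ X]
    (hpoly : (Set.extremePoints ℝ (Metric.closedBall (0 : X) 1)).Finite)
    {y : X} (hy : ‖y‖ = 1) (hye : y ∈ Set.extremePoints ℝ (Metric.closedBall (0 : X) 1)) :
    ∃ f ∈ SuppJ y, ∀ z : X, ‖z‖ ≤ 1 → z ≠ y → f z < 1 := by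
  set V := Set.extremePoints ℝ (Metric.closedBall (0 : X) 1) with hV
  have : ProperSpace X := FiniteDimensional.proper ℝ X
  have hB : convexHull ℝ V = Metric.closedBall (0 : X) 1 := by
    rw [← closure_convexHull_extremePoints (isCompact_closedBall (0 : X) 1)
      (convex_closedBall _ _), ← hV]
    exact (hpoly.isCompact_convexHull ℝ).isClosed.closure_eq.symm
  set C := convexHull ℝ (V \ {y}) with hC
  have hCB : C ⊆ Metric.closedBall (0 : X) 1 := by
    rw [← hB]; exact convexHull_mono Set.sdiff_subset
  have hyC : y ∉ C := fun h =>
    (extremePoints_convexHull_subset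
      (inter_extremePoints_subset_extremePoints_of_subset hCB ⟨h, hye⟩)).2 rfl
  obtain ⟨g, u, hgu, huy⟩ := geometric_hahn_banach_closed_point (convex_convexHull ℝ (V \ {y}))
    (((hpoly.subset Set.sdiff_subset).isCompact_convexHull ℝ).isClosed) hyC
  have hins : insert y (V \ {y}) = V := by
    rw [Set.insert_sdiff_singleton, Set.insert_eq_of_mem hye]
  have key : ∀ z : X, ‖z‖ ≤ 1 → z ≠ y → g z < g y := by
    intro z hz hzy
    have hz' : z ∈ convexHull ℝ (insert y (V \ {y})) := by
      rw [hins, hB]; simpa using hz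
    rcases (V \ {y}).eq_empty_or_nonempty with he | hne
    · rw [he] at hz'
      simp at hz'
      exact absurd hz' hzy
    rw [convexHull_insert hne, mem_convexJoin] at hz'
    obtain ⟨y', hy', c, hc, a, b, ha, hb, hab, rfl⟩ := hz'
    rw [Set.mem_singleton_iff] at hy'
    subst hy'
    have hcy : g c < g y' := (hgu c hc).trans huy
    have hb' : 0 < b := by
      rcases hb.eq_or_lt with h | h
      · exfalso; apply hzy
        have : a = 1 := by linarith
        simp [← h, this]
      · exact h
    have : a = 1 - b := by linarith
    simp only [map_add, map_smul, smul_eq_mul, this]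
    nlinarith
  have hgy : 0 < g y := by
    have h0 := key 0 (by simp) (by rintro rfl; simp at hy)
    simpa using h0
  have hle : ∀ z : X, ‖z‖ ≤ 1 → g z ≤ g y := fun z hz => by
    by_cases h : z = y
    · rw [h]
    · exact (key z hz h).le
  have hnorm : ‖g‖ = g y := by
    apply le_antisymm
    · refine g.opNorm_le_of_unit_norm hgy.le fun z hz => ?_
      rw [Real.norm_eq_abs, abs_le]
      have := hle (-z) (by simp [hz])
      rw [map_neg] at this
      exact ⟨by linarith, hle z hz.le⟩
    · have := g.le_opNorm y
      rw [hy, mul_one] at this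
      exact (le_abs_self _).trans this
  refine ⟨(g y)⁻¹ • g, ⟨?_, ?_⟩, fun z hz hzy => ?_⟩
  · rw [norm_smul, hnorm, norm_inv, Real.norm_eq_abs, abs_of_pos hgy, inv_mul_cancel₀ hgy.ne']
  · simp [hy, hgy.ne']
  · have := key z hz hzy
    simp only [smul_apply, smul_eq_mul]
    rw [inv_mul_lt_iff₀ hgy]
    simpa using this

theorem stmt_18 {X : Type*} [NormedAddCommGroup X] [NormedSpace ℝ X]
    [FiniteDimensional ℝ X]
    (hpoly : (Set.extremePoints ℝ (Metric.closedBall (0 : X) 1)).Finite)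
    (hP1 : ∀ x y : X, segment ℝ x y ⊆ Metric.sphere (0 : X) 1 → BJOrth x y →
      x ∈ Set.extremePoints ℝ (Metric.closedBall (0 : X) 1) ∧
      y ∈ Set.extremePoints ℝ (Metric.closedBall (0 : X) 1)) :
    ∀ x : X, ‖x‖ = 1 → LocalP x := by
  rintro x hx ⟨y, hy, hxy, hJ⟩
  have hye : y ∈ Set.extremePoints ℝ (Metric.closedBall (0 : X) 1) := by
    obtain ⟨f, hf, hfy⟩ := exists_dual_vector ℝ y (by simp [hy])
    have hfy' : f y = ‖y‖ := by simpa using hfy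
    rcases hJ f ⟨hf, hfy'⟩ with h | h
    · exact (hP1 x y (segment_subset_sphere_of_functional hx hy hf (h.2.trans hx)
        (hfy'.trans hy)) hxy).2
    · have hneg : BJOrth x (-y) := fun t => by simpa using hxy (-t)
      rw [← neg_neg y]
      exact neg_mem_extremePoints_closedBall
        (hP1 x (-y) (segment_subset_sphere_of_functional hx (by simpa using hy) h.1
          (h.2.trans hx) (by simp [hfy', hy])) hneg).2
  obtain ⟨f, hf, hlt⟩ := exists_exposing hpoly hy hye
  rcases hJ f hf with h | h
  · have hxeq : x = y := by
      by_contra hne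
      have := hlt x hx.le hne
      rw [h.2, hx] at this
      exact lt_irrefl _ this
    have := hxy (-1)
    rw [hx, hxeq] at this
    norm_num at this
  · have hxeq : -x = y := by
      by_contra hne
      have h1 := hlt (-x) (by simp [hx]) hne
      have h2 := h.2
      rw [neg_apply, hx] at h2
      rw [map_neg, h2] at h1
      exact lt_irrefl _ h1
    have := hxy 1
    rw [hx, ← hxeq] at this
    norm_num at this
end
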